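/- arXiv:1204.1961 — 2 statements merged into one kernel-verified Lean document; each statement's English description precedes it below -/
import Mathlib

section
/- Every 2-connected graph on n vertices with δ ≥ α and δ ≥ (n+2)/3 is hamiltonian, where δ is the minimum degree and α the independence number. -/
open SimpleGraph

variable {V : Type*}

/-- `G` is `k`-connected: more than `k` vertices and removing fewer than `k`
vertices leaves a connected graph. -/
def KConnected (G : SimpleGraph V) [Fintype V] [DecidableEq V] (k : ℕ) : Prop :=
  k < Fintype.card V ∧
    ∀ S : Finset V, S.card < k → (G.induce ((↑S : Set V)ᶜ)).Connected

/-- vertex connectivity `κ`. -/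
noncomputable def connectivity (G : SimpleGraph V) [Fintype V] [DecidableEq V] : ℕ :=
  sSup {k | KConnected G k}

/-- independence number `α`. -/
noncomputable def indepNumber (G : SimpleGraph V) [Fintype V] [DecidableEq V] : ℕ :=
  sSup {k | ∃ s : Finset V, (∀ u ∈ s, ∀ v ∈ s, ¬ G.Adj u v) ∧ s.card = k}

/-- circumference `c`: length of a longest cycle. -/
noncomputable def circumference (G : SimpleGraph V) [Fintype V] [DecidableEq V] : ℕ :=
  sSup {n | ∃ (v : V) (w : G.Walk v v), w.IsCycle ∧ w.length = n}

/-- `w` is a longest cycle of `G`. -/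
def IsLongestCycle {G : SimpleGraph V} {v : V} (w : G.Walk v v) : Prop :=
  w.IsCycle ∧ ∀ (u : V) (w' : G.Walk u u), w'.IsCycle → w'.length ≤ w.length

/-- dominating cycle: every edge has an endpoint on the cycle. -/
def IsDominatingCycle {G : SimpleGraph V} {v : V} (w : G.Walk v v) : Prop :=
  w.IsCycle ∧ ∀ x y, G.Adj x y → x ∈ w.support ∨ y ∈ w.support

/-- generalized cycle of length `n` with vertex set `W`: single vertices are
cycles of length 1, edges are cycles of length 2. -/
def ExtCycle (G : SimpleGraph V) (W : Set V) (n : ℕ) : Prop :=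
  (n = 1 ∧ ∃ v : V, W = {v}) ∨
  (n = 2 ∧ ∃ u v : V, G.Adj u v ∧ W = {u, v}) ∨
  (3 ≤ n ∧ ∃ (v : V) (w : G.Walk v v), w.IsCycle ∧ w.length = n ∧
      W = {x | x ∈ w.support})

/-- `p̄`: the length of a longest path in `G \ C`. -/
noncomputable def pathBar (G : SimpleGraph V) [Fintype V] [DecidableEq V] {v : V} (w : G.Walk v v) : ℕ :=
  sSup {n | ∃ (a b : {x : V | x ∉ w.support})
      (p : (G.induce {x : V | x ∉ w.support}).Walk a b), p.IsPath ∧ p.length = n}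

/-- `c̄`: the length of a longest (generalized) cycle in `G \ C`. -/
noncomputable def cycBar (G : SimpleGraph V) [Fintype V] [DecidableEq V] {v : V} (w : G.Walk v v) : ℕ :=
  sSup {n | ∃ W, ExtCycle (G.induce {x : V | x ∉ w.support}) W n}

/-- `CD_m`-cycle: every (generalized) cycle of length at least `m` meets `w`. -/
def IsCDCycle (G : SimpleGraph V) {v : V} (w : G.Walk v v) (m : ℕ) : Prop :=
  w.IsCycle ∧ ∀ (W : Set V) (n : ℕ), ExtCycle G W n → m ≤ n → ∃ x ∈ W, x ∈ w.support


namespace NW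

open Finset

/-- `l` is the vertex list of a path from `x` to `y`. -/
def PL {V : Type*} (G : SimpleGraph V) (x y : V) (l : List V) : Prop :=
  l.head? = some x ∧ l.getLast? = some y ∧ l.IsChain G.Adj ∧ l.Nodup

/-- there is a cycle with exactly `k ≥ 3` vertices. -/
def HasCyc {V : Type*} (G : SimpleGraph V) (k : ℕ) : Prop :=
  3 ≤ k ∧ ∃ x y l, PL G x y l ∧ G.Adj y x ∧ l.length = k

section basics
variable {V : Type*} {G : SimpleGraph V} {x y z w : V} {l m : List V}

lemma PL.single (x : V) : PL G x x [x] := by simp [PL]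

lemma PL.append (h1 : PL G x y l) (h2 : PL G z w m) (h : G.Adj y z)
    (hd : ∀ v ∈ l, v ∉ m) : PL G x w (l ++ m) := by
  obtain ⟨a1, a2, a3, a4⟩ := h1
  obtain ⟨b1, b2, b3, b4⟩ := h2
  refine ⟨by simp [List.head?_append, a1], by simp [List.getLast?_append, b2], ?_, ?_⟩
  · rw [List.isChain_append]
    refine ⟨a3, b3, ?_⟩
    intro u hu v hv
    rw [a2] at hu; rw [b1] at hv
    simp at hu hv; subst hu; subst hv; exact h
  · rw [List.nodup_append]
    refine ⟨a4, b4, ?_⟩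
    rintro u hu v hv rfl
    exact hd u hu hv

lemma PL.rev (h : PL G x y l) : PL G y x l.reverse := by
  obtain ⟨a1, a2, a3, a4⟩ := h
  refine ⟨by simpa using a2, by simpa using a1, ?_, by simpa using a4⟩
  rw [List.isChain_reverse]
  exact a3.imp (fun _ _ h => h.symm)

lemma PL.left_mem (h : PL G x y l) : x ∈ l := List.mem_of_head? h.1
lemma PL.right_mem (h : PL G x y l) : y ∈ l := List.mem_of_getLast? h.2.1
lemma PL.pos (h : PL G x y l) : 0 < l.length := List.length_pos_of_mem h.left_mem

lemma PL.exists_walk (h : PL G x y l) : ∃ p : G.Walk x y, p.support = l := by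
  obtain ⟨a1, a2, a3, a4⟩ := h
  have hne : l ≠ [] := by rintro rfl; simp at a1
  have h1 : l.head hne = x := by
    rw [List.head?_eq_some_head hne] at a1; simpa using a1
  have h2 : l.getLast hne = y := by
    rw [List.getLast?_eq_some_getLast hne] at a2; simpa using a2
  refine ⟨(Walk.ofSupport l hne a3).copy h1 h2, by simp⟩

lemma HasCyc.le_card [Fintype V] {k : ℕ} (h : HasCyc G k) : k ≤ Fintype.card V := by
  obtain ⟨_, x, y, l, h, -, rfl⟩ := h
  exact h.2.2.2.length_le_card

lemma HasCyc.isHamiltonian [Fintype V] [DecidableEq V] (h : HasCyc G (Fintype.card V)) :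
    G.IsHamiltonian := by
  intro _
  obtain ⟨h3, x, y, l, h, hadj, hl⟩ := h
  obtain ⟨p, rfl⟩ := h.exists_walk
  have hp : p.IsPath := by rw [Walk.isPath_def]; exact h.2.2.2
  have hlen : p.length + 1 = Fintype.card V := by rw [← hl]; simp
  refine ⟨y, Walk.cons hadj p, ?_⟩
  rw [Walk.isHamiltonianCycle_iff_isCycle_and_length_eq, Walk.cons_isCycle_iff]
  refine ⟨⟨hp, ?_⟩, by simpa using hlen⟩
  intro he
  cases p with
  | nil => simp at he
  | cons hxw q =>
    rw [Walk.cons_isPath_iff] at hp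
    simp only [Walk.edges_cons, List.mem_cons] at he
    rcases he with he | he
    · rw [Sym2.eq_iff] at he
      rcases he with ⟨rfl, rfl⟩ | ⟨rfl, _⟩
      · exact hadj.ne rfl
      · have := (Walk.isPath_iff_nil.1 hp.1).eq_nil
        subst this
        simp at hlen
        omega
    · exact hp.2 (Walk.snd_mem_support_of_mem_edges q he)

/-- function form of a cycle -/
lemma HasCyc.exists_fun {k : ℕ} (h : HasCyc G k) :
    ∃ f : ZMod k → V, Function.Injective f ∧ ∀ i, G.Adj (f i) (f (i + 1)) := by
  obtain ⟨h3, x, y, l, ⟨a1, a2, a3, a4⟩, hadj, rfl⟩ := h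
  have : NeZero l.length := ⟨by omega⟩
  have hlt : ∀ i : ZMod l.length, i.val < l.length := fun i => ZMod.val_lt i
  refine ⟨fun i => l[i.val]'(hlt i), ?_, ?_⟩
  · intro i j hij
    simp only at hij
    rw [a4.getElem_inj_iff] at hij
    exact ZMod.val_injective _ hij
  · intro i
    have h1 : Fact (1 < l.length) := ⟨by omega⟩
    have hv : (1 : ZMod l.length).val = 1 := ZMod.val_one _
    by_cases hi : i.val + 1 < l.length
    · have : (i + 1).val = i.val + 1 := by
        rw [ZMod.val_add_of_lt (by rw [hv]; exact hi), hv]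
      simp only [this]
      exact List.isChain_iff_getElem.1 a3 _ hi
    · have hi' : i.val = l.length - 1 := by have := hlt i; omega
      have : (i + 1).val = 0 := by
        rw [ZMod.val_add, hv, hi']
        have : l.length - 1 + 1 = l.length := by omega
        rw [this, Nat.mod_self]
      simp only [this, hi']
      have e1 : l[l.length - 1]'(by omega) = y := by
        rw [List.getLast?_eq_getElem?] at a2
        rw [List.getElem?_eq_some_iff] at a2
        exact a2.2
      have e2 : l[0]'(by omega) = x := by
        rw [List.head?_eq_getElem?, List.getElem?_eq_some_iff] at a1
        exact a1.2
      rw [e1, e2]; exact hadj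

/-- segments of a cyclic function -/
lemma seg {k : ℕ} (f : ZMod k → V) (hf : Function.Injective f)
    (hadj : ∀ i, G.Adj (f i) (f (i + 1))) (j : ZMod k) (m : ℕ) (hm : m < k) :
    ∃ l, PL G (f j) (f (j + m)) l ∧ l.length = m + 1 ∧
      ∀ v, v ∈ l ↔ ∃ s : ℕ, s ≤ m ∧ v = f (j + s) := by
  induction m with
  | zero =>
    refine ⟨[f j], by simpa using PL.single (f j), rfl, ?_⟩
    intro v; simp
  | succ m ih =>
    obtain ⟨l, h1, h2, h3⟩ := ih (by omega)
    refine ⟨l ++ [f (j + (m + 1 : ℕ))], h1.append (PL.single _) ?_ ?_, by simp [h2], ?_⟩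
    · have := hadj (j + m)
      push_cast
      rwa [← add_assoc]
    · intro v hv hv'
      simp only [List.mem_singleton] at hv'
      obtain ⟨s, hs, rfl⟩ := (h3 v).1 hv
      have := add_left_cancel (hf hv')
      rw [ZMod.natCast_eq_natCast_iff'] at this
      rw [Nat.mod_eq_of_lt (by omega), Nat.mod_eq_of_lt hm] at this
      omega
    · intro v
      simp only [List.mem_append, h3, List.mem_singleton]
      constructor
      · rintro (⟨s, hs, rfl⟩ | rfl)
        · exact ⟨s, by omega, rfl⟩
        · exact ⟨m + 1, le_rfl, rfl⟩
      · rintro ⟨s, hs, rfl⟩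
        rcases Nat.lt_or_ge s (m + 1) with h | h
        · exact Or.inl ⟨s, by omega, rfl⟩
        · have : s = m + 1 := by omega
          subst this
          exact Or.inr rfl

/-- extending a path along a numbered path -/
lemma extend {n : ℕ} (p : ℕ → V) (hp : ∀ i j, i < n → j < n → p i = p j → i = j)
    (hadj : ∀ i, i + 1 < n → G.Adj (p i) (p (i + 1))) {a : ℕ} (h : PL G x (p a) l)
    (hl : ∀ v ∈ l, ∀ i, a < i → i < n → v ≠ p i) (b : ℕ) (hab : a ≤ b) (hb : b < n) :
    ∃ l', PL G x (p b) l' ∧ l'.length = l.length + (b - a) ∧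
      ∀ v, v ∈ l' ↔ v ∈ l ∨ ∃ i, a < i ∧ i ≤ b ∧ v = p i := by
  induction b, hab using Nat.le_induction with
  | base =>
    refine ⟨l, h, by simp, ?_⟩
    intro v
    constructor
    · exact Or.inl
    · rintro (h | ⟨i, h1, h2, _⟩)
      · exact h
      · omega
  | succ b hab ih =>
    obtain ⟨l', h1, h2, h3⟩ := ih (by omega)
    refine ⟨l' ++ [p (b + 1)], h1.append (PL.single _) (hadj b hb) ?_, by simp [h2]; omega, ?_⟩
    · intro v hv hv'
      simp only [List.mem_singleton] at hv'
      rcases (h3 v).1 hv with hv | ⟨i, i1, i2, rfl⟩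
      · exact hl v hv (b + 1) (by omega) hb hv'
      · have := hp _ _ (by omega) hb hv'
        omega
    · intro v
      simp only [List.mem_append, h3, List.mem_singleton]
      constructor
      · rintro ((h | ⟨i, h1, h2, h3⟩) | h)
        · exact Or.inl h
        · exact Or.inr ⟨i, h1, by omega, h3⟩
        · exact Or.inr ⟨b + 1, by omega, le_rfl, h⟩
      · rintro (h | ⟨i, h1, h2, h3⟩)
        · exact Or.inl (Or.inl h)
        · rcases Nat.lt_or_ge i (b + 1) with h | h
          · exact Or.inl (Or.inr ⟨i, h1, by omega, h3⟩)
          · have : i = b + 1 := by omega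
            subst this
            exact Or.inr h3

lemma upseg {n : ℕ} (p : ℕ → V) (hp : ∀ i j, i < n → j < n → p i = p j → i = j)
    (hadj : ∀ i, i + 1 < n → G.Adj (p i) (p (i + 1))) (a b : ℕ) (hab : a ≤ b) (hb : b < n) :
    ∃ l', PL G (p a) (p b) l' ∧ l'.length = b - a + 1 ∧
      ∀ v, v ∈ l' ↔ ∃ i, a ≤ i ∧ i ≤ b ∧ v = p i := by
  obtain ⟨l', h1, h2, h3⟩ := extend (G := G) p hp hadj (PL.single (p a))
    (by
      intro v hv i hi hin h
      simp only [List.mem_singleton] at hv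
      subst hv
      have := hp _ _ (by omega) hin h
      omega) b hab hb
  refine ⟨l', h1, by simp [h2]; omega, ?_⟩
  intro v
  rw [h3]
  constructor
  · rintro (h | ⟨i, h1, h2, h3⟩)
    · simp at h; exact ⟨a, le_rfl, hab, h⟩
    · exact ⟨i, by omega, h2, h3⟩
  · rintro ⟨i, h1', h2', h3'⟩
    rcases Nat.lt_or_ge a i with h | h
    · exact Or.inr ⟨i, h, h2', h3'⟩
    · have : i = a := by omega
      subst this
      exact Or.inl (by simp [h3'])

end basics

section dirac
open Classical
variable {V : Type*} {G : SimpleGraph V}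

lemma length_ge_of_subset {n : ℕ} {l : List V} (p : ℕ → V)
    (hp : ∀ i j, i < n → j < n → p i = p j → i = j) (S : Finset ℕ) (hS : ∀ i ∈ S, i < n)
    (h : ∀ i ∈ S, p i ∈ l) : S.card ≤ l.length := by
  have h1 : (S.image p).card = S.card := by
    apply Finset.card_image_of_injOn
    intro i hi j hj hij
    exact hp i j (hS i hi) (hS j hj) hij
  have h2 : S.image p ⊆ l.toFinset := by
    intro v hv
    rw [Finset.mem_image] at hv
    obtain ⟨i, hi, rfl⟩ := hv
    simpa using h i hi
  calc S.card = (S.image p).card := h1.symm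
    _ ≤ l.toFinset.card := Finset.card_le_card h2
    _ ≤ l.length := List.toFinset_card_le l

/-- Crossing case. -/
lemma dirac_cross {N δ : ℕ} (hδ : 2 ≤ δ) (p : ℕ → V)
    (hp : ∀ i j, i < N + 1 → j < N + 1 → p i = p j → i = j)
    (hadj : ∀ i, i + 1 < N + 1 → G.Adj (p i) (p (i + 1)))
    (X Y : Finset ℕ) (hX : ∀ i, i ∈ X ↔ i < N + 1 ∧ G.Adj (p 0) (p i))
    (hY : ∀ i, i ∈ Y ↔ i < N + 1 ∧ G.Adj (p N) (p i))
    (hXc : δ ≤ X.card) (hYc : δ ≤ Y.card)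
    (hcr : ∃ i ∈ X, ∃ j ∈ Y, j < i) : ∃ k, (2 * δ ≤ k ∨ k = N + 1) ∧ HasCyc G k := by
  have hex : ∃ d, ∃ i ∈ X, ∃ j ∈ Y, i = j + d + 1 := by
    obtain ⟨i, hi, j, hj, hij⟩ := hcr
    exact ⟨i - j - 1, i, hi, j, hj, by omega⟩
  obtain ⟨i, hi, j, hj, hij⟩ := Nat.find_spec hex
  have hmin : ∀ i' ∈ X, ∀ j' ∈ Y, j' < i' → i - j ≤ i' - j' := by
    intro i' hi' j' hj' hlt
    have := Nat.find_min' hex (m := i' - j' - 1) ⟨i', hi', j', hj', by omega⟩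
    omega
  have hji : j < i := by omega
  clear hij
  have hiX := (hX i).1 hi
  have hjY := (hY j).1 hj
  obtain ⟨l1, a1, a2, a3⟩ := upseg (G := G) p hp hadj 0 j (by omega) (by omega)
  obtain ⟨l2, b1, b2, b3⟩ := upseg (G := G) p hp hadj i N (by omega) (by omega)
  have hPL := a1.append b1.rev hjY.2.symm (by
    intro v hv hv'
    rw [List.mem_reverse] at hv'
    obtain ⟨s, s1, s2, rfl⟩ := (a3 v).1 hv
    obtain ⟨t, t1, t2, hst⟩ := (b3 _).1 hv'
    have := hp _ _ (by omega) (by omega) hst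
    omega)
  have hlen : (l1 ++ l2.reverse).length = j + N - i + 2 := by
    simp only [List.length_append, List.length_reverse]; omega
  have h0X : ∀ i' ∈ X, i' ≠ 0 := by
    rintro i' hi' rfl
    exact ((hX 0).1 hi').2.ne rfl
  have hNY : ∀ j' ∈ Y, j' ≠ N := by
    rintro j' hj' rfl
    exact ((hY _).1 hj').2.ne rfl
  have hXl : ∀ i' ∈ X, i' < N + 1 := fun i' h => ((hX i').1 h).1
  have hYl : ∀ i' ∈ Y, i' < N + 1 := fun i' h => ((hY i').1 h).1
  have hN3 : 3 ≤ N + 1 := by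
    have : X ⊆ Finset.Ioo 0 (N + 1) := by
      intro i' hi'
      rw [Finset.mem_Ioo]
      have := h0X i' hi'
      have := hXl i' hi'
      omega
    have := Finset.card_le_card this
    rw [Nat.card_Ioo] at this
    omega
  by_cases hgap : i = j + 1
  · refine ⟨N + 1, Or.inr rfl, hN3, _, _, _, hPL, hiX.2.symm, by rw [hlen]; omega⟩
  · have hle : 2 * δ ≤ j + N - i + 2 := by
      have hinj : Set.InjOn (fun i' => i' - 1) (X : Set ℕ) := by
        intro s hs t ht hst
        have := h0X s hs
        have := h0X t ht
        simp only at hst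
        omega
      have hc1 := Finset.card_image_of_injOn hinj
      have hdis : Disjoint (X.image (fun i' => i' - 1)) Y := by
        rw [Finset.disjoint_left]
        intro s hs hsY
        rw [Finset.mem_image] at hs
        obtain ⟨t, ht, rfl⟩ := hs
        have := h0X t ht
        have := hmin t ht _ hsY (by omega)
        omega
      have hc2 := Finset.card_union_of_disjoint hdis
      have hsub : X.image (fun i' => i' - 1) ∪ Y ⊆ Finset.range (j + 1) ∪ Finset.Ico (i - 1) N := by
        intro s hs
        simp only [Finset.mem_union, Finset.mem_image, Finset.mem_range, Finset.mem_Ico] at hs ⊢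
        rcases hs with ⟨t, ht, rfl⟩ | hs
        · have := h0X t ht
          have := hXl t ht
          have := hmin t ht j hj
          omega
        · have := hNY s hs
          have := hYl s hs
          have := hmin i hi s hs
          omega
      have := (Finset.card_le_card hsub).trans (Finset.card_union_le _ _)
      rw [Finset.card_range, Nat.card_Ico] at this
      omega
    exact ⟨_, Or.inl hle, by omega, _, _, _, hPL, hiX.2.symm, hlen⟩

/-- Non-crossing case: Hamilton path, no cut vertex. -/
lemma dirac_noncross {N δ : ℕ} (hδ : 2 ≤ δ) (p : ℕ → V)
    (hp : ∀ i j, i < N + 1 → j < N + 1 → p i = p j → i = j)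
    (hadj : ∀ i, i + 1 < N + 1 → G.Adj (p i) (p (i + 1)))
    (hcut : ∀ m, 0 < m → m < N → ∃ a b, a < m ∧ m < b ∧ b < N + 1 ∧ G.Adj (p a) (p b))
    (X Y : Finset ℕ) (hX : ∀ i, i ∈ X ↔ i < N + 1 ∧ G.Adj (p 0) (p i))
    (hY : ∀ i, i ∈ Y ↔ i < N + 1 ∧ G.Adj (p N) (p i))
    (hXc : δ ≤ X.card) (hYc : δ ≤ Y.card)
    (hcr : ∀ i ∈ X, ∀ j ∈ Y, i ≤ j) : ∃ k, 2 * δ ≤ k ∧ HasCyc G k := by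
  have hXne : X.Nonempty := Finset.card_pos.1 (by omega)
  have hYne : Y.Nonempty := Finset.card_pos.1 (by omega)
  obtain ⟨r, hrX, hrmax⟩ := X.exists_max_image id hXne
  obtain ⟨s, hsY, hsmin⟩ := Y.exists_min_image id hYne
  simp only [id] at hrmax hsmin
  have hrs := hcr r hrX s hsY
  have hrX' := (hX r).1 hrX
  have hsY' := (hY s).1 hsY
  have hr0 : r ≠ 0 := by rintro rfl; exact hrX'.2.ne rfl
  have hsN : s ≠ N := by rintro rfl; exact hsY'.2.ne rfl
  -- maximal jumps
  have hjump : ∀ m, 0 < m → m < N → ∃ a b, a < m ∧ m < b ∧ b < N + 1 ∧ G.Adj (p a) (p b) ∧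
      ∀ a' b', a' < m → b' < N + 1 → G.Adj (p a') (p b') → b' ≤ b := by
    intro m hm hmN
    obtain ⟨a, b, h1, h2, h3, h4⟩ := hcut m hm hmN
    obtain ⟨b0, hb0, hmax⟩ := ((Finset.range (N + 1)).filter
      (fun b => ∃ a, a < m ∧ G.Adj (p a) (p b))).exists_max_image id
      ⟨b, by simp only [Finset.mem_filter, Finset.mem_range]; exact ⟨h3, a, h1, h4⟩⟩
    simp only [Finset.mem_filter, Finset.mem_range, id] at hb0 hmax
    obtain ⟨hb0, a0, ha0, hab0⟩ := hb0
    exact ⟨a0, b0, ha0, lt_of_lt_of_le h2 (hmax b ⟨h3, a, h1, h4⟩), hb0, hab0,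
      fun a' b' h1 h2 h3 => hmax b' ⟨h2, a', h1, h3⟩⟩
  let S : ℕ → Prop := fun b => ∃ m a Q, m ≤ s ∧ m < b ∧ a ≤ m ∧ b < N + 1 ∧
    PL G (p a) (p m) Q ∧ G.Adj (p a) (p b) ∧ (∀ v ∈ Q, ∃ i, i ≤ m ∧ v = p i) ∧
    p 0 ∈ Q ∧ (∀ i ∈ X, p i ∈ Q) ∧
    ∀ a' b', a' < m → b' < N + 1 → G.Adj (p a') (p b') → b' ≤ b
  have hbase : ∃ b, S b := by
    obtain ⟨a, b, h1, h2, h3, h4, h5⟩ := hjump r (by omega) (by omega)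
    obtain ⟨i, hi, himin⟩ := (X.filter (fun i => a < i)).exists_min_image id
      ⟨r, by simp only [Finset.mem_filter]; exact ⟨hrX, h1⟩⟩
    simp only [Finset.mem_filter, id] at hi himin
    have hir := hrmax i hi.1
    obtain ⟨l1, a1, a2, a3⟩ := upseg (G := G) p hp hadj 0 a (by omega) (by omega)
    obtain ⟨l2, b1, b2, b3⟩ := upseg (G := G) p hp hadj i r (by omega) (by omega)
    have hPL := a1.rev.append b1 ((hX i).1 hi.1).2 (by
      intro v hv hv'
      rw [List.mem_reverse] at hv
      obtain ⟨s, s1, s2, rfl⟩ := (a3 v).1 hv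
      obtain ⟨t, t1, t2, hst⟩ := (b3 _).1 hv'
      have := hp _ _ (by omega) (by omega) hst
      omega)
    refine ⟨b, r, a, _, hrs, h2, by omega, h3, hPL, h4, ?_, ?_, ?_, h5⟩
    · intro v hv
      rw [List.mem_append, List.mem_reverse, a3, b3] at hv
      rcases hv with ⟨t, t1, t2, rfl⟩ | ⟨t, t1, t2, rfl⟩
      · exact ⟨t, by omega, rfl⟩
      · exact ⟨t, by omega, rfl⟩
    · rw [List.mem_append, List.mem_reverse]
      exact Or.inl a1.left_mem
    · intro t ht
      rw [List.mem_append, List.mem_reverse, a3, b3]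
      by_cases hta : a < t
      · exact Or.inr ⟨t, himin t ⟨ht, hta⟩, hrmax t ht, rfl⟩
      · exact Or.inl ⟨t, by omega, by omega, rfl⟩
  have hbdd : ∀ b, S b → b < N + 1 := by
    rintro b ⟨m, a, Q, h1, h2, h3, h4, h5⟩
    exact h4
  obtain ⟨b, hb, hbmax⟩ : ∃ b, S b ∧ ∀ b', S b' → b' ≤ b := by
    obtain ⟨b0, hb0⟩ := hbase
    obtain ⟨b, hb, hmax⟩ := ((Finset.range (N + 1)).filter S).exists_max_image id
      ⟨b0, by simp only [Finset.mem_filter, Finset.mem_range]; exact ⟨hbdd _ hb0, hb0⟩⟩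
    simp only [Finset.mem_filter, Finset.mem_range, id] at hb hmax
    exact ⟨b, hb.2, fun b' h => hmax b' ⟨hbdd _ h, h⟩⟩
  obtain ⟨m, a, Q, hms, hmb, ham, hbN, hQ, hab, hQm, hQ0, hQX, hmax⟩ := hb
  have hQm' : ∀ v ∈ Q, ∀ i, m < i → i < N + 1 → v ≠ p i := by
    intro v hv i hi hiN h
    obtain ⟨t, ht, rfl⟩ := hQm v hv
    have := hp _ _ (by omega) hiN h
    omega
  have hsb : s < b := by
    by_contra hle
    obtain ⟨a', b', h1, h2, h3, h4, h5⟩ := hjump b (by omega) (by omega)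
    have hma' : m ≤ a' := by
      by_contra hlt
      have := hmax a' b' (by omega) h3 h4
      omega
    obtain ⟨l', e1, e2, e3⟩ := extend p hp hadj hQ hQm' a' hma' (by omega)
    have hl' : ∀ v ∈ l', ∃ i, i < b ∧ v = p i := by
      intro v hv
      rcases (e3 v).1 hv with hv | ⟨i, i1, i2, rfl⟩
      · obtain ⟨t, ht, rfl⟩ := hQm v hv
        exact ⟨t, by omega, rfl⟩
      · exact ⟨i, by omega, rfl⟩
    have hPL := ((PL.single (G := G) (p b)).append e1 hab.symm (by
      intro v hv hv'
      simp only [List.mem_singleton] at hv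
      subst hv
      obtain ⟨i, i1, i2⟩ := hl' _ hv'
      have := hp _ _ (by omega) (by omega) i2
      omega)).rev
    have : S b' := by
      refine ⟨b, a', _, by omega, h2, by omega, h3, hPL, h4, ?_, ?_, ?_, h5⟩
      · intro v hv
        simp only [List.mem_reverse, List.mem_append, List.mem_singleton] at hv
        rcases hv with rfl | hv
        · exact ⟨b, le_rfl, rfl⟩
        · obtain ⟨i, i1, i2⟩ := hl' v hv
          exact ⟨i, by omega, i2⟩
      · simp only [List.mem_reverse, List.mem_append, List.mem_singleton]
        exact Or.inr ((e3 _).2 (Or.inl hQ0))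
      · intro i hi
        simp only [List.mem_reverse, List.mem_append, List.mem_singleton]
        exact Or.inr ((e3 _).2 (Or.inl (hQX i hi)))
    have := hbmax b' this
    omega
  -- final cycle
  obtain ⟨j, hj, hjmax⟩ := (Y.filter (fun i => i < b)).exists_max_image id
      ⟨s, by simp only [Finset.mem_filter]; exact ⟨hsY, hsb⟩⟩
  simp only [Finset.mem_filter, id] at hj hjmax
  have hsj := hsmin j hj.1
  obtain ⟨l', e1, e2, e3⟩ := extend p hp hadj hQ hQm' j (by omega) (by omega)
  obtain ⟨l2, b1, b2, b3⟩ := upseg (G := G) p hp hadj b N (by omega) (by omega)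
  have hPL := e1.append b1.rev ((hY j).1 hj.1).2.symm (by
    intro v hv hv'
    rw [List.mem_reverse] at hv'
    obtain ⟨t, t1, t2, rfl⟩ := (b3 _).1 hv'
    rcases (e3 _).1 hv with hv | ⟨i, i1, i2, i3⟩
    · exact hQm' _ hv t (by omega) (by omega) rfl
    · have := hp _ _ (by omega) (by omega) i3
      omega)
  have hcard : 2 * δ ≤ (insert 0 X ∪ Y).card := by
    have h0 : 0 ∉ X := by
      intro h
      exact ((hX 0).1 h).2.ne rfl
    have h1 := Finset.card_insert_of_notMem h0
    have h2 := Finset.card_union_add_card_inter (insert 0 X) Y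
    have h3 : insert 0 X ∩ Y ⊆ {r} := by
      intro t ht
      rw [Finset.mem_inter, Finset.mem_insert] at ht
      rw [Finset.mem_singleton]
      rcases ht with ⟨rfl | ht, htY⟩
      · have := hcr r hrX 0 htY
        omega
      · have := hcr r hrX t htY
        have := hrmax t ht
        omega
    have := Finset.card_le_card h3
    rw [Finset.card_singleton] at this
    omega
  have hlen : (insert 0 X ∪ Y).card ≤ (l' ++ l2.reverse).length := by
    apply length_ge_of_subset (n := N + 1) p hp
    · intro i hi
      rw [Finset.mem_union, Finset.mem_insert] at hi
      rcases hi with (rfl | hi) | hi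
      · omega
      · exact ((hX i).1 hi).1
      · exact ((hY i).1 hi).1
    · intro i hi
      rw [Finset.mem_union, Finset.mem_insert] at hi
      rw [List.mem_append, List.mem_reverse, e3, b3]
      rcases hi with (rfl | hi) | hi
      · exact Or.inl (Or.inl hQ0)
      · exact Or.inl (Or.inl (hQX i hi))
      · have hsi := hsmin i hi
        have hiN := ((hY i).1 hi).1
        by_cases hib : i < b
        · have := hjmax i ⟨hi, hib⟩
          by_cases him : i = m
          · subst him
            exact Or.inl (Or.inl hQ.right_mem)
          · exact Or.inl (Or.inr ⟨i, by omega, by omega, rfl⟩)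
        · exact Or.inr ⟨i, by omega, by omega, rfl⟩
  exact ⟨_, hcard.trans hlen, by omega, _, _, _, hPL, hab.symm, rfl⟩

end dirac

section gaps
open Classical

lemma natCast_inj_lt {c a b : ℕ} (ha : a < c) (hb : b < c) (h : (a : ZMod c) = b) : a = b := by
  rw [ZMod.natCast_eq_natCast_iff', Nat.mod_eq_of_lt ha, Nat.mod_eq_of_lt hb] at h
  exact h

lemma exists_shift {c : ℕ} [NeZero c] (i j : ZMod c) (hij : i ≠ j) :
    ∃ d : ℕ, 0 < d ∧ d < c ∧ j = i + d := by
  refine ⟨(j - i).val, ?_, ZMod.val_lt _, ?_⟩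
  · rw [Nat.pos_iff_ne_zero]
    intro h
    rw [ZMod.val_eq_zero, sub_eq_zero] at h
    exact hij h.symm
  · simp

/-- the nearest pair yields a start of an empty window -/
lemma exists_start {c k : ℕ} [NeZero c] (A B : Finset (ZMod c)) (hk : k < c)
    (hAB : ∀ a ∈ A, ∀ d : ℕ, 1 ≤ d → d ≤ k → a + d ∉ B)
    (hA : (A \ B).Nonempty) (hB : B.Nonempty) :
    ∃ u ∈ A \ B, ∀ d : ℕ, 1 ≤ d → d ≤ k → u + d ∉ A ∪ B := by
  have hex : ∃ d : ℕ, 0 < d ∧ ∃ a ∈ A \ B, a + d ∈ B := by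
    obtain ⟨a, ha⟩ := hA
    obtain ⟨b, hb⟩ := hB
    obtain ⟨d, h1, h2, h3⟩ := exists_shift a b (by
      rintro rfl
      exact (Finset.mem_sdiff.1 ha).2 hb)
    exact ⟨d, h1, a, ha, h3 ▸ hb⟩
  obtain ⟨h0, u, hu, hub⟩ := Nat.find_spec hex
  have hmin := fun m => Nat.find_min' hex (m := m)
  generalize Nat.find hex = D at *
  have hu' := Finset.mem_sdiff.1 hu
  have hD : k < D := by
    by_contra h
    exact hAB u hu'.1 D (by omega) (by omega) hub
  refine ⟨u, hu, ?_⟩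
  intro d h1 h2 hmem
  have hnB := hAB u hu'.1 d h1 h2
  rw [Finset.mem_union] at hmem
  have hdA := hmem.resolve_right hnB
  have := hmin (D - d) ⟨by omega, u + d, Finset.mem_sdiff.2 ⟨hdA, hnB⟩, by
    rw [Nat.cast_sub (by omega)]
    have : u + (d : ZMod c) + ((D : ZMod c) - d) = u + D := by ring
    rwa [this]⟩
  omega

lemma gap_count {c k t : ℕ} [NeZero c] (A B : Finset (ZMod c)) (hk : k < c) (hk2 : 2 ≤ k)
    (ht : 2 ≤ t) (hAc : t ≤ A.card) (hBc : t ≤ B.card)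
    (hAA : ∀ a ∈ A, a + 1 ∉ A)
    (hBB : ∀ a ∈ B, a + 1 ∉ B)
    (hAB : ∀ a ∈ A, ∀ d : ℕ, 1 ≤ d → d ≤ k → a + d ∉ B)
    (hBA : ∀ a ∈ B, ∀ d : ℕ, 1 ≤ d → d ≤ k → a + d ∉ A) :
    3 * t + 2 * (k - 2) ≤ c := by
  -- two starts
  obtain ⟨u, v, huv, huS, hvS, hu, hv⟩ : ∃ u v, u ≠ v ∧ u ∈ A ∪ B ∧ v ∈ A ∪ B ∧
      (∀ d : ℕ, 1 ≤ d → d ≤ k → u + d ∉ A ∪ B) ∧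
      (∀ d : ℕ, 1 ≤ d → d ≤ k → v + d ∉ A ∪ B) := by
    by_cases hI : 1 < (A ∩ B).card
    · obtain ⟨u, hu, v, hv, huv⟩ := Finset.one_lt_card.1 hI
      rw [Finset.mem_inter] at hu hv
      refine ⟨u, v, huv, Finset.mem_union_left _ hu.1, Finset.mem_union_left _ hv.1, ?_, ?_⟩
      · intro d h1 h2 h
        rw [Finset.mem_union] at h
        exact h.elim (hBA u hu.2 d h1 h2) (hAB u hu.1 d h1 h2)
      · intro d h1 h2 h
        rw [Finset.mem_union] at h
        exact h.elim (hBA v hv.2 d h1 h2) (hAB v hv.1 d h1 h2)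
    · have e1 := Finset.card_sdiff_add_card_inter A B
      have e2 := Finset.card_sdiff_add_card_inter B A
      rw [Finset.inter_comm] at e2
      have hA : (A \ B).Nonempty := Finset.card_pos.1 (by omega)
      have hB : (B \ A).Nonempty := Finset.card_pos.1 (by omega)
      obtain ⟨u, hu, hu2⟩ := exists_start A B hk hAB hA (hB.mono Finset.sdiff_subset)
      obtain ⟨v, hv, hv2⟩ := exists_start B A hk hBA hB (hA.mono Finset.sdiff_subset)
      rw [Finset.mem_sdiff] at hu hv
      refine ⟨u, v, ?_, Finset.mem_union_left _ hu.1, Finset.mem_union_right _ hv.1, hu2, ?_⟩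
      · rintro rfl
        exact hu.2 hv.1
      · rwa [Finset.union_comm] at hv2
  let W : ZMod c → Finset (ZMod c) := fun u => (Finset.Ico 3 (k + 1)).image (fun d : ℕ => u + d)
  have hWc : ∀ u, (W u).card = k - 2 := by
    intro u
    rw [Finset.card_image_of_injOn, Nat.card_Ico]
    · omega
    · intro a ha b hb hab
      simp only [Finset.coe_Ico, Set.mem_Ico] at ha hb
      exact natCast_inj_lt (by omega) (by omega) (add_left_cancel hab)
  let A1 := A.image (fun a => a + 1)
  let B2 := B.image (fun a => a + 2)
  have hA1c : A1.card = A.card := Finset.card_image_of_injective _ (add_left_injective 1)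
  have hB2c : B2.card = B.card := Finset.card_image_of_injective _ (add_left_injective 2)
  have d1 : Disjoint A A1 := by
    rw [Finset.disjoint_left]
    intro x hx hx1
    obtain ⟨a, ha, rfl⟩ := Finset.mem_image.1 hx1
    exact hAA a ha hx
  have d2 : Disjoint (A ∪ A1) B2 := by
    rw [Finset.disjoint_left]
    intro x hx hx1
    obtain ⟨b, hb, rfl⟩ := Finset.mem_image.1 hx1
    rw [Finset.mem_union] at hx
    rcases hx with hx | hx
    · exact hBA b hb 2 (by omega) hk2 (by simpa using hx)
    · obtain ⟨a, ha, hab⟩ := Finset.mem_image.1 hx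
      have : a = b + 1 := by linear_combination hab
      exact hBA b hb 1 le_rfl (by omega) (by simpa [this] using ha)
  have hW : ∀ u : ZMod c, (∀ d : ℕ, 1 ≤ d → d ≤ k → u + d ∉ A ∪ B) →
      Disjoint (A ∪ A1 ∪ B2) (W u) := by
    intro u hu
    rw [Finset.disjoint_right]
    intro x hx hx1
    obtain ⟨d, hd, rfl⟩ := Finset.mem_image.1 hx
    rw [Finset.mem_Ico] at hd
    simp only [Finset.mem_union] at hx1 hu
    rcases hx1 with (h | h) | h
    · exact hu d (by omega) (by omega) (Or.inl h)
    · obtain ⟨a, ha, hab⟩ := Finset.mem_image.1 h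
      have : a = u + (d - 1 : ℕ) := by
        rw [Nat.cast_sub (by omega)]; push_cast; linear_combination hab
      exact hu (d - 1) (by omega) (by omega) (Or.inl (this ▸ ha))
    · obtain ⟨a, ha, hab⟩ := Finset.mem_image.1 h
      have : a = u + (d - 2 : ℕ) := by
        rw [Nat.cast_sub (by omega)]; push_cast; linear_combination hab
      exact hu (d - 2) (by omega) (by omega) (Or.inr (this ▸ ha))
  have key : ∀ u v : ZMod c, v ∈ A ∪ B → (∀ d : ℕ, 1 ≤ d → d ≤ k → u + d ∉ A ∪ B) →
      ∀ d d' : ℕ, d' < d → d ≤ k → u + d ≠ v + d' := by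
    intro u v hv hu d d' h1 h2 h
    apply hu (d - d') (by omega) (by omega)
    have : v = u + (d - d' : ℕ) := by
      rw [Nat.cast_sub (by omega)]; linear_combination -h
    exact this ▸ hv
  have d3 : Disjoint (A ∪ A1 ∪ B2 ∪ W u) (W v) := by
    rw [Finset.disjoint_union_left]
    refine ⟨hW v hv, ?_⟩
    rw [Finset.disjoint_left]
    intro x hx hx1
    obtain ⟨d, hd, rfl⟩ := Finset.mem_image.1 hx
    obtain ⟨d', hd', h⟩ := Finset.mem_image.1 hx1
    rw [Finset.mem_Ico] at hd hd'
    rcases lt_trichotomy d d' with hl | hl | hl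
    · exact key v u huS hv d' d hl (by omega) h
    · subst hl
      exact huv (add_right_cancel h).symm
    · exact key u v hvS hu d d' hl (by omega) h.symm
  have := Finset.card_le_univ (A ∪ A1 ∪ B2 ∪ W u ∪ W v)
  rw [Finset.card_union_of_disjoint d3, Finset.card_union_of_disjoint (hW u hu),
    Finset.card_union_of_disjoint d2, Finset.card_union_of_disjoint d1, hWc, hWc, hA1c, hB2c,
    ZMod.card] at this
  omega

end gaps

section core
open Classical
variable {V : Type*} {G : SimpleGraph V}

lemma exists_max_nat (P : ℕ → Prop) (B n0 : ℕ) (h0 : P n0) (hB : ∀ k, P k → k ≤ B) :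
    ∃ k, P k ∧ ∀ k', P k' → k' ≤ k := by
  obtain ⟨b, hb, hmax⟩ := ((Finset.range (B + 1)).filter P).exists_max_image id
    ⟨n0, by simp only [Finset.mem_filter, Finset.mem_range]; exact ⟨by have := hB _ h0; omega, h0⟩⟩
  simp only [Finset.mem_filter, Finset.mem_range, id] at hb hmax
  exact ⟨b, hb.2, fun k' h => hmax k' ⟨by have := hB _ h; omega, h⟩⟩

lemma hasCyc_of_fun {n : ℕ} (hn : 3 ≤ n) (f : ZMod n → V) (hf : Function.Injective f)
    (hadj : ∀ i, G.Adj (f i) (f (i + 1))) : HasCyc G n := by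
  obtain ⟨l, h1, h2, h3⟩ := seg f hf hadj 0 (n - 1) (by omega)
  refine ⟨hn, _, _, l, h1, ?_, by omega⟩
  have := hadj (0 + (n - 1 : ℕ))
  have e : (0 : ZMod n) + (n - 1 : ℕ) + 1 = 0 := by
    rw [Nat.cast_sub (by omega)]; simp
  rwa [e] at this

lemma ham_path {n : ℕ} [Fintype V] (hn : 3 ≤ n) (hV : Fintype.card V = n) (u v : V)
    (hc : HasCyc (G ⊔ SimpleGraph.edge u v) n) (hnc : ¬ HasCyc G n) :
    ∃ p : ℕ → V, (∀ i j, i < n → j < n → p i = p j → i = j) ∧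
      (∀ i, i + 1 < n → G.Adj (p i) (p (i + 1))) ∧ ∀ w, ∃ i, i < n ∧ p i = w := by
  have : NeZero n := ⟨by omega⟩
  obtain ⟨f, hf, hadj⟩ := hc.exists_fun
  obtain ⟨i, hi⟩ : ∃ i, ¬ G.Adj (f i) (f (i + 1)) := by
    by_contra h
    push Not at h
    exact hnc (hasCyc_of_fun hn f hf h)
  have hedge : ∀ j, G.Adj (f j) (f (j + 1)) ∨ s(f j, f (j + 1)) = s(u, v) := by
    intro j
    have := hadj j
    rw [SimpleGraph.sup_adj, SimpleGraph.edge_adj] at this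
    rcases this with h | h
    · exact Or.inl h
    · right
      rw [Sym2.eq_iff]
      have := h.1
      tauto
  have hiuv := (hedge i).resolve_left hi
  refine ⟨fun s => f (i + 1 + s), ?_, ?_, ?_⟩
  · intro a b ha hb hab
    exact natCast_inj_lt ha hb (add_left_cancel (hf hab))
  · intro s hs
    have e : i + 1 + ((s + 1 : ℕ) : ZMod n) = i + 1 + s + 1 := by push_cast; ring
    simp only [e]
    refine (hedge _).resolve_right ?_
    intro h
    rw [← hiuv, Sym2.eq_iff] at h
    rcases h with ⟨h, -⟩ | ⟨h, h'⟩
    · have h := hf h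
      have : ((s + 1 : ℕ) : ZMod n) = (0 : ℕ) := by push_cast; linear_combination h
      have := natCast_inj_lt hs (by omega) this
      omega
    · have h := hf h
      have h' := hf h'
      have h2 : (s : ZMod n) = (0 : ℕ) := by push_cast; linear_combination h
      have := natCast_inj_lt (by omega) (by omega) h2
      subst this
      have h3 : ((2 : ℕ) : ZMod n) = (0 : ℕ) := by push_cast at h' ⊢; linear_combination h'
      have := natCast_inj_lt (by omega) (by omega) h3
      omega
  · intro w
    have hbij : Function.Bijective f := by
      rw [Fintype.bijective_iff_injective_and_card]
      exact ⟨hf, by rw [ZMod.card, hV]⟩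
    obtain ⟨k, rfl⟩ := hbij.2 w
    refine ⟨(k - (i + 1)).val, ZMod.val_lt _, ?_⟩
    simp

lemma insert_path {c : ℕ} (hmax : ∀ k, HasCyc G k → k ≤ c) (f : ZMod c → V)
    (hf : Function.Injective f) (hadj : ∀ i, G.Adj (f i) (f (i + 1))) (i : ZMod c) (d : ℕ)
    (hd0 : 0 < d) (hdc : d < c) {x y : V} {Q : List V} (hQ : PL G x y Q)
    (hQf : ∀ v ∈ Q, ∀ j, v ≠ f j) (hx : G.Adj (f i) x) (hy : G.Adj y (f (i + d))) :
    Q.length + 1 ≤ d := by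
  obtain ⟨l, h1, h2, h3⟩ := seg f hf hadj (i + d) (c - d) (by omega)
  have e : i + (d : ZMod c) + (c - d : ℕ) = i := by
    rw [Nat.cast_sub (by omega)]; simp
  rw [e] at h1
  have hPL := h1.append hQ hx (by
    intro v hv hv'
    obtain ⟨s, -, hs⟩ := (h3 v).1 hv
    exact hQf v hv' _ hs)
  have hlen : (l ++ Q).length = c - d + 1 + Q.length := by simp [h2]
  have := hQ.pos
  have := hmax _ ⟨by omega, _, _, _, hPL, hy, rfl⟩
  omega

lemma cross_path {c : ℕ} (hc : 3 ≤ c) (hmax : ∀ k, HasCyc G k → k ≤ c) (f : ZMod c → V)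
    (hf : Function.Injective f) (hadj : ∀ i, G.Adj (f i) (f (i + 1))) (i : ZMod c) (d : ℕ)
    (hd0 : 0 < d) (hdc : d < c) {x : V}
    (hxf : ∀ j, x ≠ f j) (hx : G.Adj x (f i)) (hy : G.Adj x (f (i + d)))
    (hcr : G.Adj (f (i + 1)) (f (i + d + 1))) : False := by
  obtain ⟨l1, h1, h2, h3⟩ := seg f hf hadj (i + 1) (d - 1) (by omega)
  obtain ⟨l2, b1, b2, b3⟩ := seg f hf hadj (i + d + 1) (c - d - 1) (by omega)
  have e1 : i + 1 + ((d - 1 : ℕ) : ZMod c) = i + d := by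
    rw [Nat.cast_sub (by omega)]; push_cast; ring
  have e2 : i + d + 1 + ((c - d - 1 : ℕ) : ZMod c) = i := by
    rw [Nat.cast_sub (by omega), Nat.cast_sub (by omega)]; simp
  rw [e1] at h1
  rw [e2] at b1
  have hPL := (h1.rev.append b1 hcr (by
    intro v hv hv'
    rw [List.mem_reverse] at hv
    obtain ⟨s, s1, rfl⟩ := (h3 v).1 hv
    obtain ⟨t, t1, ht⟩ := (b3 _).1 hv'
    have ht := hf ht
    have : (s : ZMod c) = (d + t : ℕ) := by push_cast; linear_combination ht
    have := natCast_inj_lt (by omega) (by omega) this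
    omega)).append (PL.single x) hx.symm (by
    intro v hv hv'
    simp only [List.mem_singleton] at hv'
    subst hv'
    rw [List.mem_append, List.mem_reverse] at hv
    rcases hv with hv | hv
    · obtain ⟨s, -, hs⟩ := (h3 _).1 hv
      exact hxf _ hs
    · obtain ⟨s, -, hs⟩ := (b3 _).1 hv
      exact hxf _ hs)
  have hlen : (l1.reverse ++ l2 ++ [x]).length = c + 1 := by
    simp only [List.length_append, List.length_reverse, List.length_singleton]; omega
  have := hmax _ ⟨by omega, _, _, _, hPL, hy, rfl⟩
  omega

lemma long_cycle [Fintype V] {δ : ℕ} (hδ : 2 ≤ δ) (hn : 3 ≤ Fintype.card V)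
    (hdeg : ∀ v, δ ≤ ((Finset.univ : Finset V).filter (fun w => G.Adj v w)).card)
    (hcut : ∀ (v : V) (S : Set V), (∃ a ∈ S, a ≠ v) → (∃ b, b ∉ S ∧ b ≠ v) →
      ∃ a b, a ∈ S ∧ a ≠ v ∧ b ∉ S ∧ b ≠ v ∧ G.Adj a b)
    (p : ℕ → V) (hp : ∀ i j, i < Fintype.card V → j < Fintype.card V → p i = p j → i = j)
    (hadj : ∀ i, i + 1 < Fintype.card V → G.Adj (p i) (p (i + 1)))
    (hsur : ∀ w, ∃ i, i < Fintype.card V ∧ p i = w) :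
    ∃ k, (2 * δ ≤ k ∨ k = Fintype.card V) ∧ HasCyc G k := by
  obtain ⟨N, hN⟩ : ∃ N, Fintype.card V = N + 1 := ⟨Fintype.card V - 1, by omega⟩
  rw [hN] at hp hadj hsur hn ⊢
  have hX : ∀ q i, i ∈ (Finset.range (N + 1)).filter (fun i => G.Adj (p q) (p i)) ↔
      i < N + 1 ∧ G.Adj (p q) (p i) := by
    intro q i
    simp only [Finset.mem_filter, Finset.mem_range]
  have hc : ∀ q, δ ≤ ((Finset.range (N + 1)).filter (fun i => G.Adj (p q) (p i))).card := by
    intro q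
    refine (hdeg (p q)).trans (le_trans (Finset.card_le_card ?_) (Finset.card_image_le (f := p)))
    intro w hw
    obtain ⟨i, hi, rfl⟩ := hsur w
    rw [Finset.mem_filter] at hw
    exact Finset.mem_image_of_mem _ ((hX q i).2 ⟨hi, hw.2⟩)
  by_cases hcr : ∃ i ∈ (Finset.range (N + 1)).filter (fun i => G.Adj (p 0) (p i)),
      ∃ j ∈ (Finset.range (N + 1)).filter (fun i => G.Adj (p N) (p i)), j < i
  · exact dirac_cross hδ p hp hadj _ _ (hX 0) (hX N) (hc 0) (hc N) hcr
  · push Not at hcr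
    obtain ⟨k, h1, h2⟩ := dirac_noncross hδ p hp hadj (by
      intro m hm hmN
      obtain ⟨a, b, ⟨i, hi, rfl⟩, h2, h3, h4, h5⟩ := hcut (p m) {w | ∃ i, i < m ∧ w = p i}
        ⟨p 0, ⟨0, hm, rfl⟩, fun h => by have := hp _ _ (by omega) (by omega) h; omega⟩
        ⟨p N, (by
          rintro ⟨i, hi, h⟩
          have := hp _ _ (by omega) (by omega) h; omega),
          fun h => by have := hp _ _ (by omega) (by omega) h; omega⟩
      obtain ⟨j, hj, rfl⟩ := hsur b
      refine ⟨i, j, hi, ?_, hj, h5⟩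
      have : j ≠ m := by rintro rfl; exact h4 rfl
      have : ¬ j < m := fun h => h3 ⟨j, h, rfl⟩
      omega) _ _ (hX 0) (hX N) (hc 0) (hc N) hcr
    exact ⟨k, Or.inl h1, h2⟩

lemma HasCyc.mono {G' : SimpleGraph V} (h : G ≤ G') {k : ℕ} (hc : HasCyc G k) : HasCyc G' k := by
  obtain ⟨h3, x, y, l, ⟨a1, a2, a3, a4⟩, hadj, hl⟩ := hc
  exact ⟨h3, x, y, l, ⟨a1, a2, a3.imp (fun _ _ e => h e), a4⟩, h hadj, hl⟩

/-- the main argument, given a long cycle exists -/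
lemma main_arg [Fintype V] {δ : ℕ} (hn : 3 ≤ Fintype.card V)
    (hδn : Fintype.card V + 2 ≤ 3 * δ)
    (hdeg : ∀ v, δ ≤ ((Finset.univ : Finset V).filter (fun w => G.Adj v w)).card)
    (hα : ∀ s : Finset V, (∀ u ∈ s, ∀ v ∈ s, ¬ G.Adj u v) → s.card ≤ δ)
    (hnh : ¬ HasCyc G (Fintype.card V))
    (hlong : ∃ k, 2 * δ ≤ k ∧ HasCyc G k) : False := by
  obtain ⟨k0, hk0, hk0c⟩ := hlong
  obtain ⟨c, hcc, hcmax⟩ := exists_max_nat (HasCyc G) (Fintype.card V) k0 hk0c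
    (fun k h => h.le_card)
  have hc2 : 2 * δ ≤ c := hk0.trans (hcmax _ hk0c)
  have hc3 := hcc.1
  have : NeZero c := ⟨by omega⟩
  have hcn : c < Fintype.card V := by
    refine lt_of_le_of_ne hcc.le_card ?_
    rintro h
    exact hnh (h ▸ hcc)
  obtain ⟨f, hf, hadj⟩ := hcc.exists_fun
  -- longest path outside
  obtain ⟨z, hz⟩ : ∃ z, ∀ j, z ≠ f j := by
    by_contra h
    push Not at h
    have hs : Function.Surjective f := fun z => by
      obtain ⟨j, hj⟩ := h z
      exact ⟨j, hj.symm⟩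
    have := Fintype.card_le_of_surjective f hs
    rw [ZMod.card] at this
    omega
  obtain ⟨k, ⟨x, y, Q, hQ, hQf, hQk⟩, hkmax⟩ := exists_max_nat
    (fun k => ∃ x y Q, PL G x y Q ∧ (∀ v ∈ Q, ∀ j, v ≠ f j) ∧ Q.length = k)
    (Fintype.card V) 1 ⟨z, z, [z], PL.single z, by simpa using hz, rfl⟩ (by
      rintro k ⟨x, y, Q, hQ, -, rfl⟩
      exact hQ.2.2.2.length_le_card)
  have hkpos := hQ.pos
  have hck : c + k ≤ Fintype.card V := by
    have hd : Disjoint (Finset.univ.image f) Q.toFinset := by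
      rw [Finset.disjoint_left]
      intro v hv hv'
      obtain ⟨j, -, rfl⟩ := Finset.mem_image.1 hv
      exact hQf _ (List.mem_toFinset.1 hv') j rfl
    have := Finset.card_le_univ (Finset.univ.image f ∪ Q.toFinset)
    rw [Finset.card_union_of_disjoint hd, Finset.card_image_of_injective _ hf,
      List.toFinset_card_of_nodup hQ.2.2.2, Finset.card_univ, ZMod.card, hQk] at this
    exact this
  let A : V → Finset (ZMod c) := fun x => Finset.univ.filter (fun i => G.Adj x (f i))
  have hA : ∀ x i, i ∈ A x ↔ G.Adj x (f i) := by intro x i; simp [A]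
  -- degree count at the end of a longest path
  have hcount : ∀ (x y : V) (Q : List V), PL G x y Q → (∀ v ∈ Q, ∀ j, v ≠ f j) →
      Q.length = k → δ ≤ (A x).card + (k - 1) := by
    intro x y Q hQ hQf hQk
    have hsub : (Finset.univ : Finset V).filter (fun w => G.Adj x w) ⊆
        (A x).image f ∪ Q.toFinset.erase x := by
      intro w hw
      have hw := (Finset.mem_filter.1 hw).2
      rw [Finset.mem_union, Finset.mem_erase, List.mem_toFinset]
      by_cases h : ∃ j, w = f j
      · obtain ⟨j, rfl⟩ := h
        exact Or.inl (Finset.mem_image_of_mem _ ((hA x j).2 hw))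
      · push Not at h
        right
        refine ⟨hw.ne', ?_⟩
        by_contra hwQ
        have := hkmax (k + 1) ⟨w, y, [w] ++ Q, (PL.single w).append hQ hw.symm (by
          intro v hv; simp only [List.mem_singleton] at hv; subst hv; exact hwQ), by
          intro v hv
          rw [List.mem_append, List.mem_singleton] at hv
          rcases hv with rfl | hv
          · exact h
          · exact hQf v hv, by simp [hQk]⟩
        omega
    have h1 := (hdeg x).trans ((Finset.card_le_card hsub).trans (Finset.card_union_le _ _))
    rw [Finset.card_image_of_injective _ hf, Finset.card_erase_of_mem
      (List.mem_toFinset.2 hQ.left_mem), List.toFinset_card_of_nodup hQ.2.2.2, hQk] at h1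
    exact h1
  have hAA : ∀ x, (∀ j, x ≠ f j) → ∀ i ∈ A x, i + 1 ∉ A x := by
    intro x hx i hi hi1
    rw [hA] at hi hi1
    have := insert_path hcmax f hf hadj i 1 one_pos (by omega) (PL.single x)
      (by simpa using hx) hi.symm (by simpa using hi1)
    simp at this
  have hcx := hcount x y Q hQ hQf hQk
  have hxf := hQf x hQ.left_mem
  have hyf := hQf y hQ.right_mem
  by_cases hk1 : k = 1
  · -- independent set
    let T := (A x).image (fun i => f (i + 1))
    have hxT : x ∉ T := by
      intro h
      obtain ⟨i, -, hi⟩ := Finset.mem_image.1 h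
      exact hxf _ hi.symm
    have hxn : ∀ i ∈ A x, ¬ G.Adj x (f (i + 1)) := by
      intro i hi h
      exact hAA x hxf i hi ((hA x _).2 h)
    have hTn : ∀ i ∈ A x, ∀ j ∈ A x, ¬ G.Adj (f (i + 1)) (f (j + 1)) := by
      intro i hi j hj h
      have hij : i ≠ j := by rintro rfl; exact h.ne rfl
      obtain ⟨d, h1, h2, rfl⟩ := exists_shift i j hij
      exact cross_path hc3 hcmax f hf hadj i d h1 h2 hxf ((hA _ _).1 hi) ((hA _ _).1 hj) h
    have hind : ∀ u ∈ insert x T, ∀ v ∈ insert x T, ¬ G.Adj u v := by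
      intro u hu v hv
      rw [Finset.mem_insert] at hu hv
      rcases hu with rfl | hu
      · rcases hv with rfl | hv
        · exact G.irrefl
        · obtain ⟨i, hi, rfl⟩ := Finset.mem_image.1 hv
          exact hxn i hi
      · obtain ⟨i, hi, rfl⟩ := Finset.mem_image.1 hu
        rcases hv with rfl | hv
        · exact fun h => hxn i hi h.symm
        · obtain ⟨j, hj, rfl⟩ := Finset.mem_image.1 hv
          exact hTn i hi j hj
    have := hα _ hind
    rw [Finset.card_insert_of_notMem hxT, Finset.card_image_of_injective _
      (fun a b h => add_right_cancel (hf h))] at this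
    omega
  · have hcy := hcount y x Q.reverse hQ.rev (by simpa using hQf) (by simpa using hQk)
    have := gap_count (k := k) (t := δ - (k - 1)) (A x) (A y) (by omega) (by omega) (by omega)
      (by omega) (by omega) (hAA x hxf) (hAA y hyf) (by
        intro a ha d h1 h2 h
        have := insert_path hcmax f hf hadj a d h1 (by omega) hQ hQf ((hA _ _).1 ha).symm
          ((hA _ _).1 h)
        omega) (by
        intro a ha d h1 h2 h
        have := insert_path hcmax f hf hadj a d h1 (by omega) hQ.rev (by simpa using hQf)
          ((hA _ _).1 ha).symm ((hA _ _).1 h)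
        rw [List.length_reverse] at this
        omega)
    omega

lemma core [Fintype V] {δ : ℕ} (hn : 3 ≤ Fintype.card V)
    (hδn : Fintype.card V + 2 ≤ 3 * δ)
    (hdeg : ∀ v, δ ≤ ((Finset.univ : Finset V).filter (fun w => G.Adj v w)).card)
    (hα : ∀ s : Finset V, (∀ u ∈ s, ∀ v ∈ s, ¬ G.Adj u v) → s.card ≤ δ)
    (hcut : ∀ (v : V) (S : Set V), (∃ a ∈ S, a ≠ v) → (∃ b, b ∉ S ∧ b ≠ v) →
      ∃ a b, a ∈ S ∧ a ≠ v ∧ b ∉ S ∧ b ≠ v ∧ G.Adj a b) : HasCyc G (Fintype.card V) := by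
  by_contra hnh
  obtain ⟨G', hGG', hmax⟩ := Finite.exists_le_maximal
    (p := fun H : SimpleGraph V => ¬ HasCyc H (Fintype.card V)) hnh
  have hdeg' : ∀ v, δ ≤ ((Finset.univ : Finset V).filter (fun w => G'.Adj v w)).card := by
    intro v
    refine (hdeg v).trans (Finset.card_le_card ?_)
    intro w hw
    rw [Finset.mem_filter] at hw ⊢
    exact ⟨hw.1, hGG' hw.2⟩
  have hα' : ∀ s : Finset V, (∀ u ∈ s, ∀ v ∈ s, ¬ G'.Adj u v) → s.card ≤ δ :=
    fun s hs => hα s (fun u hu v hv h => hs u hu v hv (hGG' h))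
  have hcut' : ∀ (v : V) (S : Set V), (∃ a ∈ S, a ≠ v) → (∃ b, b ∉ S ∧ b ≠ v) →
      ∃ a b, a ∈ S ∧ a ≠ v ∧ b ∉ S ∧ b ≠ v ∧ G'.Adj a b := by
    intro v S h1 h2
    obtain ⟨a, b, e1, e2, e3, e4, e5⟩ := hcut v S h1 h2
    exact ⟨a, b, e1, e2, e3, e4, hGG' e5⟩
  obtain ⟨u, v, huv, hnadj⟩ : ∃ u v, u ≠ v ∧ ¬ G'.Adj u v := by
    by_contra h
    push Not at h
    apply hmax.1
    have e : ZMod (Fintype.card V) ≃ V := by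
      have : NeZero (Fintype.card V) := ⟨by omega⟩
      exact Fintype.equivOfCardEq (ZMod.card _)
    refine hasCyc_of_fun hn e e.injective ?_
    intro i
    apply h
    intro he
    have he := e.injective he
    have : ((1 : ℕ) : ZMod (Fintype.card V)) = (0 : ℕ) := by
      push_cast; linear_combination -he
    have := natCast_inj_lt (by omega) (by omega) this
    omega
  have hc : HasCyc (G' ⊔ SimpleGraph.edge u v) (Fintype.card V) := by
    by_contra hno
    have hle := hmax.2 hno le_sup_left
    apply hnadj
    apply hle
    rw [SimpleGraph.sup_adj, SimpleGraph.edge_adj]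
    exact Or.inr ⟨Or.inl ⟨rfl, rfl⟩, huv⟩
  obtain ⟨p, p1, p2, p3⟩ := ham_path hn rfl u v hc hmax.1
  obtain ⟨k, hk, hkc⟩ := long_cycle (by omega) hn hdeg' hcut' p p1 p2 p3
  rcases hk with hk | rfl
  · exact main_arg hn hδn hdeg' hα' hmax.1 ⟨k, hk, hkc⟩
  · exact hmax.1 hkc

end core

end NW

theorem nashWilliams_hamiltonian (G : SimpleGraph V) [Fintype V] [DecidableEq V] [DecidableRel G.Adj]
    (h2 : KConnected G 2)
    (hα : indepNumber G ≤ G.minDegree)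
    (hδ : (G.minDegree : ℝ) ≥ (Fintype.card V + 2 : ℝ) / 3) :
    G.IsHamiltonian := by
  classical
  have h3 : 3 ≤ Fintype.card V := h2.1
  have hδn : Fintype.card V + 2 ≤ 3 * G.minDegree := by
    have : (Fintype.card V + 2 : ℝ) ≤ 3 * (G.minDegree : ℝ) := by linarith
    exact_mod_cast this
  apply NW.HasCyc.isHamiltonian
  apply NW.core h3 hδn
  · intro v
    refine (G.minDegree_le_degree v).trans (le_of_eq ?_)
    rw [← SimpleGraph.card_neighborFinset_eq_degree]
    congr 1
    ext w
    simp
  · intro s hs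
    refine le_trans ?_ hα
    refine le_csSup ⟨Fintype.card V, ?_⟩ ⟨s, hs, rfl⟩
    rintro k ⟨t, -, rfl⟩
    exact Finset.card_le_univ t
  · rintro v S ⟨a, haS, hav⟩ ⟨b, hbS, hbv⟩
    have hcon := h2.2 {v} (by simp)
    have ha : a ∈ ((({v} : Finset V) : Set V)ᶜ) := by simpa using hav
    have hb : b ∈ ((({v} : Finset V) : Set V)ᶜ) := by simpa using hbv
    obtain ⟨w⟩ := hcon.preconnected ⟨a, ha⟩ ⟨b, hb⟩
    obtain ⟨⟨⟨x, y⟩, hd⟩, -, hd1, hd2⟩ := w.exists_boundary_dart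
      {x | (x : V) ∈ S} haS hbS
    exact ⟨x, y, hd1, by simpa using x.2, hd2, by simpa using y.2, hd⟩
end

section
/- Every 2-connected graph on n vertices with minimum degree δ ≥ (n + κ)/3, where κ is its connectivity, is hamiltonian. -/
open SimpleGraph

variable {V : Type*}

namespace Niko

/-- a cycle of `G`, as a list of vertices -/
def Cyc (G : SimpleGraph V) (l : List V) : Prop :=
  l.Nodup ∧ 3 ≤ l.length ∧ l.IsChain G.Adj ∧ ∀ a ∈ l.getLast?, ∀ b ∈ l.head?, G.Adj a b

/-- a longest cycle -/
def MaxCyc (G : SimpleGraph V) (l : List V) : Prop :=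
  Cyc G l ∧ ∀ l', Cyc G l' → l'.length ≤ l.length

theorem cyc_rot {G : SimpleGraph V} {A B : List V} (h : Cyc G (A ++ B)) : Cyc G (B ++ A) := by
  obtain ⟨h1, h2, h3, h4⟩ := h
  rcases eq_or_ne A [] with rfl | hA
  · simpa [Cyc] using ⟨h1, h2, h3, h4⟩
  rcases eq_or_ne B [] with rfl | hB
  · rw [List.append_nil] at h1 h2 h3 h4
    exact ⟨h1, h2, h3, h4⟩
  refine ⟨?_, ?_, ?_, ?_⟩
  · exact List.nodup_append_comm.1 h1
  · simp at h2 ⊢; omega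
  · rw [List.isChain_append] at h3 ⊢
    refine ⟨h3.2.1, h3.1, ?_⟩
    intro x hx y hy
    apply h4
    · rw [List.getLast?_append_of_ne_nil _ hB]; exact hx
    · rw [List.head?_append_of_ne_nil _ hA]; exact hy
  · rw [List.isChain_append] at h3
    rw [List.getLast?_append_of_ne_nil _ hA, List.head?_append_of_ne_nil _ hB]
    exact h3.2.2

theorem maxCyc_rot {G : SimpleGraph V} {A B : List V} (h : MaxCyc G (A ++ B)) :
    MaxCyc G (B ++ A) := by
  refine ⟨cyc_rot h.1, fun l' hl' => ?_⟩
  have := h.2 l' hl'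
  simp at this ⊢; omega

theorem ear_split {G : SimpleGraph V} {A B D e : List V} {u v : V}
    (h : MaxCyc G (A ++ u :: (B ++ v :: D))) (he : e ≠ []) (hn : e.Nodup)
    (hd : ∀ x ∈ e, x ∉ A ++ u :: (B ++ v :: D)) (hc : (u :: (e ++ [v])).IsChain G.Adj) :
    e.length ≤ B.length := by
  have hle : 1 ≤ e.length := List.length_pos_iff.2 he
  have key : Cyc G (A ++ u :: (e ++ v :: D)) := by
    obtain ⟨⟨h1, h2, h3, h4⟩, -⟩ := h
    refine ⟨?_, ?_, ?_, ?_⟩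
    · simp only [List.nodup_append, List.nodup_cons, List.mem_append, List.mem_cons] at h1 hd ⊢
      grind
    · simp; omega
    · simp only [List.isChain_append, List.isChain_cons] at h3 hc ⊢
      simp at h3 hc ⊢
      grind
    · simp [List.getLast?_append, List.getLast?_cons] at h4 ⊢
      grind
  have := h.2 _ key
  simp at this; omega

theorem ear_gap {G : SimpleGraph V} {l e : List V} (h : MaxCyc G l) {i j : ℕ} (hij : i < j)
    (hj : j < l.length) (he : e ≠ []) (hn : e.Nodup) (hd : ∀ x ∈ e, x ∉ l)
    (hc : (l[i] :: (e ++ [l[j]])).IsChain G.Adj) : i + e.length + 1 ≤ j := by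
  have hl : l = l.take i ++ l[i] :: ((l.drop (i+1)).take (j - i - 1) ++ l[j] :: l.drop (j+1)) := by
    apply List.ext_getElem
    · simp; omega
    · intro k h1 h2
      grind
  rw [hl] at h
  have := ear_split h he hn (by rw [← hl]; exact hd) hc
  simp at this; omega

theorem ear_gap_wrap {G : SimpleGraph V} {l e : List V} (h : MaxCyc G l) {i : ℕ} (hi : 0 < i)
    (hj : i < l.length) (he : e ≠ []) (hn : e.Nodup) (hd : ∀ x ∈ e, x ∉ l)
    (hc : (l[i] :: (e ++ [l[0]])).IsChain G.Adj) : i + e.length + 1 ≤ l.length := by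
  have h' : MaxCyc G (l.drop i ++ l.take i) := maxCyc_rot (by rwa [List.take_append_drop])
  have e0 : (l.drop i ++ l.take i)[0]'(by simp; omega) = l[i] := by grind
  have e1 : (l.drop i ++ l.take i)[l.length - i]'(by simp; omega) = l[0] := by grind
  have := ear_gap h' (i := 0) (j := l.length - i) (by omega) (by simp; omega) he hn
    (by intro x hx; have := hd x hx; contrapose! this
        rw [List.mem_append] at this
        exact this.elim List.mem_of_mem_drop List.mem_of_mem_take) (by rw [e0, e1]; exact hc)
  omega

/-- crossing lemma: successors of neighbours of an outside vertex are non-adjacent -/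
theorem cross_split {G : SimpleGraph V} {A B D : List V} {v a a' b b' : V}
    (h : MaxCyc G (A ++ B ++ D)) (hv : v ∉ A ++ B ++ D) (hA : A.getLast? = some a)
    (hB : B.head? = some a') (hB' : B.getLast? = some b) (hD : D.head? = some b')
    (hva : G.Adj v a) (hvb : G.Adj v b) : ¬ G.Adj a' b' := by
  intro hab
  have key : Cyc G (A ++ v :: (B.reverse ++ D)) := by
    obtain ⟨⟨h1, h2, h3, h4⟩, -⟩ := h
    refine ⟨?_, ?_, ?_, ?_⟩
    · simp only [List.nodup_append, List.nodup_cons, List.mem_append, List.mem_cons,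
        List.nodup_reverse, List.mem_reverse] at h1 hv ⊢
      grind
    · simp at h2 ⊢; omega
    · simp only [List.isChain_append, List.isChain_cons] at h3 ⊢
      have hr : B.reverse.IsChain G.Adj := by
        rw [List.isChain_reverse]
        exact h3.1.2.1.imp (fun _ _ h => h.symm)
      simp [hA, hB, hB', hD, hr, hab, hva.symm, hvb] at h3 ⊢
      grind
    · have hA' : A ≠ [] := by rintro rfl; simp at hA
      have hDn : D ≠ [] := by rintro rfl; simp at hD
      intro x hx y hy
      apply h4
      · rw [List.getLast?_append_of_ne_nil _ hDn]
        rw [List.getLast?_append_of_ne_nil _ (by simp), ← List.singleton_append,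
          ← List.append_assoc, List.getLast?_append_of_ne_nil _ hDn] at hx
        exact hx
      · rw [List.append_assoc, List.head?_append_of_ne_nil _ hA']
        rwa [List.head?_append_of_ne_nil _ hA'] at hy
  have := h.2 _ key
  simp at this

theorem cross {G : SimpleGraph V} {l : List V} (h : MaxCyc G l) {v : V} (hv : v ∉ l) {i j : ℕ}
    (hij : i < j) (hj : j + 1 < l.length) (hi : G.Adj v l[i]) (hj' : G.Adj v l[j]) :
    ¬ G.Adj l[i+1] l[j+1] := by
  have hl : l = l.take (i+1) ++ (l.drop (i+1)).take (j - i) ++ l.drop (j+1) := by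
    apply List.ext_getElem
    · simp; omega
    · intro k h1 h2
      grind
  rw [hl] at h
  have hn : v ∉ l.take (i+1) ++ (l.drop (i+1)).take (j - i) ++ l.drop (j+1) := by rwa [← hl]
  clear hl
  refine cross_split (a := l[i]) (b := l[j]) h hn ?_ ?_ ?_ ?_ hi hj'
  · rw [List.getLast?_eq_getElem?, List.length_take, min_eq_left (by omega)]
    simp
  · rw [List.head?_take, if_neg (by omega), List.head?_drop]; simp
  · rw [List.getLast?_eq_getElem?, List.length_take, min_eq_left (by simp; omega),
      List.getElem?_take_of_lt (by omega), List.getElem?_drop,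
      show i + 1 + (j - i - 1) = j by omega]
    simp
  · rw [List.head?_drop]; simp

end Niko
namespace Niko

theorem exists_min_pair (P Q : ℕ → Prop) (lo hi : ℕ) (hlt : lo < hi) (hlo : P lo) (hhi : Q hi) :
    ∃ a b, lo ≤ a ∧ a < b ∧ b ≤ hi ∧ P a ∧ Q b ∧ ∀ k, a < k → k < b → ¬ P k ∧ ¬ Q k := by
  induction h : hi - lo using Nat.strong_induction_on generalizing lo hi with
  | _ n ih =>
    by_cases hk : ∃ k, lo < k ∧ k < hi ∧ (P k ∨ Q k)
    · obtain ⟨k, h1, h2, h3 | h3⟩ := hk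
      · obtain ⟨a, b, g⟩ := ih (hi - k) (by omega) k hi h2 h3 hhi rfl
        exact ⟨a, b, by omega, g.2⟩
      · obtain ⟨a, b, g⟩ := ih (k - lo) (by omega) lo k h1 hlo h3 rfl
        exact ⟨a, b, g.1, g.2.1, by omega, g.2.2.2⟩
    · push Not at hk
      exact ⟨lo, hi, le_rfl, hlt, le_rfl, hlo, hhi, fun k h1 h2 => by
        have := hk k h1 h2; tauto⟩

theorem gap_count (c L : ℕ) (hL : 2 ≤ L) (X Y : Finset ℕ) (h0 : 0 ∈ X) (y : ℕ) (hy : y ∈ Y)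
    (hy0 : 0 < y)
    (h2 : ∀ i ∈ X ∪ Y, ∀ j ∈ X ∪ Y, i < j → i + 2 ≤ j)
    (h2c : ∀ i ∈ X ∪ Y, i + 2 ≤ c)
    (hXY : ∀ i ∈ X, ∀ j ∈ Y, i < j → i + L ≤ j)
    (hYX : ∀ i ∈ Y, ∀ j ∈ X, i < j → i + L ≤ j)
    (hYc : ∀ i ∈ Y, 0 < i → i + L ≤ c) :
    ∃ m, 2 ≤ m ∧ (X ∩ Y).card ≤ m ∧ 2 * (X ∪ Y).card + (L - 2) * m ≤ c := by
  classical
  set U := X ∪ Y with hU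
  set M := U.filter (fun u => u + L ≤ c ∧ ∀ k ∈ U, u < k → u + L ≤ k) with hM
  have hMm : ∀ u, u ∈ M ↔ u ∈ U ∧ u + L ≤ c ∧ ∀ k ∈ U, u < k → u + L ≤ k := by
    intro u; rw [hM, Finset.mem_filter]
  have hyc := hYc y hy hy0
  refine ⟨M.card, ?_, ?_, ?_⟩
  · obtain ⟨a, b, h1, h2', h3, ha, hb, hk⟩ :=
      exists_min_pair (· ∈ X) (· ∈ Y) 0 y hy0 h0 hy
    obtain ⟨a', b', h1', h2'', h3', ha', hb', hk'⟩ :=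
      exists_min_pair (· ∈ Y) (fun k => k ∈ X ∨ k = c) y c (by omega) hy (Or.inr rfl)
    have haM : a ∈ M := by
      rw [hMm]
      have := hXY a ha b hb h2'
      have hbc := hYc b hb (by omega)
      refine ⟨by simp [hU, ha], by omega, fun k hkU hak => ?_⟩
      by_contra hlt
      have := hk k hak (by omega)
      simp [hU] at hkU; tauto
    have haM' : a' ∈ M := by
      rw [hMm]
      have hbL : a' + L ≤ b' := by
        rcases hb' with hb' | hb'
        · exact hYX a' ha' b' hb' h2''
        · rw [hb']; exact hYc a' ha' (by omega)
      refine ⟨by simp [hU, ha'], by omega, fun k hkU hak => ?_⟩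
      by_contra hlt
      have := hk' k hak (by omega)
      simp [hU] at hkU; tauto
    have : ({a, a'} : Finset ℕ) ⊆ M := by
      intro z hz; simp at hz; rcases hz with rfl | rfl <;> assumption
    have h5 := Finset.card_le_card this
    rwa [Finset.card_pair (by omega)] at h5
  · apply Finset.card_le_card
    intro u hu
    simp only [Finset.mem_inter] at hu
    rw [hMm]
    refine ⟨by simp [hU, hu.1], ?_, ?_⟩
    · rcases Nat.eq_zero_or_pos u with rfl | h
      · omega
      · exact hYc u hu.2 h
    · intro k hk hlt
      simp only [hU, Finset.mem_union] at hk
      rcases hk with hk | hk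
      · exact hYX u hu.2 k hk hlt
      · exact hXY u hu.1 k hk hlt
  · have hinj : ((U ×ˢ Finset.range 2) ∪ (M ×ˢ Finset.Ico 2 L)).card ≤ (Finset.range c).card := by
      apply Finset.card_le_card_of_injOn (fun p => p.1 + p.2)
      · rintro ⟨u, k⟩ hp
        simp only [Finset.coe_union, Set.mem_union, Finset.mem_coe, Finset.mem_product,
          Finset.mem_range, Finset.mem_Ico] at hp ⊢
        rcases hp with hp | hp
        · have := h2c u hp.1; omega
        · have := ((hMm u).1 hp.1).2.1; omega
      · rintro ⟨u, k⟩ hp ⟨u', k'⟩ hp' heq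
        simp only [Finset.coe_union, Set.mem_union, Finset.mem_coe, Finset.mem_product,
          Finset.mem_range, Finset.mem_Ico, hMm] at hp hp' heq
        have hu : u ∈ U := by tauto
        have hu' : u' ∈ U := by tauto
        have : u = u' := by
          rcases lt_trichotomy u u' with h | h | h
          · rcases hp with hp | hp
            · have := h2 u hu u' hu' h; omega
            · have := hp.1.2.2 u' hu' h; omega
          · exact h
          · rcases hp' with hp | hp
            · have := h2 u' hu' u hu h; omega
            · have := hp.1.2.2 u hu h; omega
        subst this
        have : k = k' := by omega
        rw [this]
    rw [Finset.card_union_of_disjoint, Finset.card_product, Finset.card_product] at hinj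
    · simp at hinj
      rw [mul_comm 2, mul_comm (L - 2)]; exact hinj
    · rw [Finset.disjoint_left]
      rintro ⟨u, k⟩ h1 h2
      simp at h1 h2; omega

/-- the cut argument -/
theorem indep_cut [Fintype V] [DecidableEq V] (G : SimpleGraph V) [DecidableRel G.Adj] (d : ℕ)
    (hd : ∀ v, d ≤ G.degree v) (S A B I : Finset V) (hAB : ∀ a ∈ A, ∀ b ∈ B, ¬ G.Adj a b)
    (hSA : Disjoint S A) (hSB : Disjoint S B) (hdAB : Disjoint A B)
    (hall : ∀ v, v ∈ S ∨ v ∈ A ∨ v ∈ B)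
    (hA : A.Nonempty) (hB : B.Nonempty) (hI : ∀ u ∈ I, ∀ v ∈ I, ¬ G.Adj u v)
    (hIc : d + 1 ≤ I.card) (h3 : Fintype.card V + S.card ≤ 3 * d) : False := by
  have hn : S.card + A.card + B.card = Fintype.card V := by
    rw [← Finset.card_union_of_disjoint hSA, ← Finset.card_union_of_disjoint, ← Finset.card_univ]
    · congr 1; ext v; have := hall v; simp; tauto
    · rw [Finset.disjoint_union_left]; exact ⟨hSB, hdAB⟩
  have nb : ∀ v (T : Finset V), (∀ w, G.Adj v w → w ∈ T) → d ≤ T.card := by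
    intro v T h
    refine (hd v).trans ?_
    rw [← G.card_neighborFinset_eq_degree]
    apply Finset.card_le_card
    intro w hw; exact h w (by simpa using hw)
  have nb1 : ∀ v ∈ I, d + I.card ≤ Fintype.card V := by
    intro v hv
    have := nb v (Finset.univ \ I) (by
      intro w hw; simp; intro hwI; exact hI v hv w hwI hw)
    rw [Finset.card_sdiff_of_subset (Finset.subset_univ _), Finset.card_univ] at this
    have := Finset.card_le_univ I
    omega
  have sideg : ∀ P Q : Finset V, (∀ a ∈ P, ∀ b ∈ Q, ¬ G.Adj a b) → Disjoint S P →
      (∀ v, v ∈ S ∨ v ∈ P ∨ v ∈ Q) → (∀ v ∈ I, v ∈ P → d + (I ∩ (S ∪ P)).card ≤ S.card + P.card) ∧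
        (∀ v ∈ P, d + 1 ≤ S.card + P.card) := by
    intro P Q hPQ hSP hal
    constructor
    · intro v hvI hvP
      have := nb v ((S ∪ P) \ (I ∩ (S ∪ P))) (by
        intro w hw
        have h1 := hal w
        have h2 := hPQ v hvP w
        have h3 := hI v hvI w
        simp; tauto)
      rw [Finset.card_sdiff_of_subset Finset.inter_subset_right,
        Finset.card_union_of_disjoint hSP] at this
      have h5 := Finset.card_le_card (Finset.inter_subset_right : I ∩ (S ∪ P) ⊆ S ∪ P)
      rw [Finset.card_union_of_disjoint hSP] at h5
      omega
    · intro v hvP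
      have := nb v ((S ∪ P).erase v) (by
        intro w hw
        have h1 := hal w
        have h2 := hPQ v hvP w
        have h3 := hw.ne'
        simp; tauto)
      rw [Finset.card_erase_of_mem (by simp [hvP]), Finset.card_union_of_disjoint hSP] at this
      have : 0 < P.card := Finset.card_pos.2 ⟨v, hvP⟩
      omega
  obtain ⟨sA, sA'⟩ := sideg A B hAB hSA hall
  obtain ⟨sB, sB'⟩ := sideg B A (fun b hb a ha h => hAB a ha b hb h.symm) hSB
    (fun v => by have := hall v; tauto)
  obtain ⟨a, ha⟩ := hA
  obtain ⟨b, hb⟩ := hB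
  have ha1 := sA' a ha
  have hb1 := sB' b hb
  have hIne : I.Nonempty := Finset.card_pos.1 (by omega)
  obtain ⟨v0, hv0⟩ := hIne
  have hn1 := nb1 v0 hv0
  by_cases hIA : ∃ v ∈ I, v ∈ A
  · obtain ⟨v, hv, hvA⟩ := hIA
    have h1 := sA v hv hvA
    by_cases hIB : ∃ v ∈ I, v ∈ B
    · obtain ⟨w, hw, hwB⟩ := hIB
      have h2 := sB w hw hwB
      have : I.card ≤ (I ∩ (S ∪ A)).card + (I ∩ (S ∪ B)).card := by
        refine le_trans (Finset.card_le_card ?_) (Finset.card_union_le _ _)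
        intro x hx
        have := hall x
        simp; tauto
      omega
    · push Not at hIB
      have : I ∩ (S ∪ A) = I := by
        rw [Finset.inter_eq_left]; intro x hx
        have := hall x
        have := hIB x hx
        simp; tauto
      rw [this] at h1
      omega
  · push Not at hIA
    by_cases hIB : ∃ v ∈ I, v ∈ B
    · obtain ⟨w, hw, hwB⟩ := hIB
      have h2 := sB w hw hwB
      have : I ∩ (S ∪ B) = I := by
        rw [Finset.inter_eq_left]; intro x hx
        have := hall x
        have := hIA x hx
        simp; tauto
      rw [this] at h2
      omega
    · push Not at hIB
      have : I.card ≤ S.card := Finset.card_le_card (by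
        intro x hx
        have := hall x
        have := hIA x hx
        have := hIB x hx
        tauto)
      omega

end Niko
namespace Niko

/-- a path from `u` to `v`, as a list of vertices -/
def Pth (G : SimpleGraph V) (u v : V) (P : List V) : Prop :=
  P.head? = some u ∧ P.getLast? = some v ∧ P.Nodup ∧ P.IsChain G.Adj

theorem Pth.ne_nil {G : SimpleGraph V} {u v : V} {P : List V} (h : Pth G u v P) : P ≠ [] := by
  rintro rfl; simpa using h.1

theorem Pth.fst_mem {G : SimpleGraph V} {u v : V} {P : List V} (h : Pth G u v P) : u ∈ P :=
  List.mem_of_mem_head? h.1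

theorem Pth.snd_mem {G : SimpleGraph V} {u v : V} {P : List V} (h : Pth G u v P) : v ∈ P :=
  List.mem_of_mem_getLast? h.2.1

theorem Pth.rev {G : SimpleGraph V} {u v : V} {P : List V} (h : Pth G u v P) :
    Pth G v u P.reverse := by
  refine ⟨by simp [h.2.1], by simp [h.1], by simp [h.2.2.1], ?_⟩
  rw [List.isChain_reverse]
  exact h.2.2.2.imp (fun _ _ h => h.symm)

theorem Pth.glue {G : SimpleGraph V} {u v w : V} {P Q : List V} (h : Pth G u v P)
    (h' : Pth G v w Q) (hd : ∀ x ∈ P, x ∈ Q → x = v) : Pth G u w (P ++ Q.tail) := by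
  have hP := h.ne_nil
  obtain ⟨q, rfl⟩ : ∃ q, Q = v :: q := by
    cases Q with
    | nil => exact absurd rfl h'.ne_nil
    | cons a q => have := h'.1; simp at this; exact ⟨q, by rw [this]⟩
  obtain ⟨h1, h2, h3, h4⟩ := h
  obtain ⟨g1, g2, g3, g4⟩ := h'
  refine ⟨?_, ?_, ?_, ?_⟩
  · rw [List.head?_append_of_ne_nil _ hP]; exact h1
  · rcases eq_or_ne q [] with rfl | hq
    · simp at g2 ⊢; rw [h2, g2]
    · simp only [List.tail_cons]
      rw [List.getLast?_append_of_ne_nil _ hq]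
      rwa [← List.singleton_append, List.getLast?_append_of_ne_nil _ hq] at g2
  · simp only [List.nodup_append, List.tail_cons, List.nodup_cons, List.mem_cons] at *
    grind
  · rw [List.tail_cons, List.isChain_append]
    rw [List.isChain_cons] at g4
    refine ⟨h4, g4.2, ?_⟩
    rw [h2]; intro x hx y hy
    simp at hx; subst hx; exact g4.1 y hy

theorem Pth.glue_mem {u v w : V} {G : SimpleGraph V} {P Q : List V} (h : Pth G u v P)
    (h' : Pth G v w Q) (x : V) : x ∈ P ++ Q.tail ↔ x ∈ P ∨ x ∈ Q := by
  obtain ⟨q, rfl⟩ : ∃ q, Q = v :: q := by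
    cases Q with
    | nil => exact absurd rfl h'.ne_nil
    | cons a q => have := h'.1; simp at this; exact ⟨q, by rw [this]⟩
  have := h.snd_mem
  simp only [List.tail_cons, List.mem_append, List.mem_cons]
  constructor
  · tauto
  · rintro (h | rfl | h) <;> tauto

theorem Pth.split {G : SimpleGraph V} {u v w : V} {X Y : List V} (h : Pth G u v (X ++ w :: Y)) :
    Pth G u w (X ++ [w]) ∧ Pth G w v (w :: Y) := by
  obtain ⟨h1, h2, h3, h4⟩ := h
  rw [List.isChain_append] at h4
  refine ⟨⟨?_, ?_, ?_, ?_⟩, ⟨?_, ?_, ?_, h4.2.1⟩⟩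
  · cases X <;> simpa using h1
  · simp
  · simp only [List.nodup_append, List.nodup_cons] at *
    grind
  · rw [List.isChain_append]
    refine ⟨h4.1, by simp, by simpa using h4.2.2⟩
  · simp
  · rwa [List.getLast?_append_of_ne_nil _ (by simp)] at h2
  · exact (List.nodup_append.1 h3).2.1

theorem link_aux {G : SimpleGraph V} (A B : Set V) (hAB : ∀ x ∈ A, x ∉ B) (n : ℕ) :
    ∀ (W : List V) (a b : V), W.length ≤ n → Pth G a b W → a ∈ A → b ∈ B →
    ∃ a ∈ A, ∃ b ∈ B, ∃ W', Pth G a b W' ∧ (∀ x ∈ W', x ∈ W) ∧ ∀ x ∈ W', (x ∈ A → x = a) ∧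
      (x ∈ B → x = b) := by
  induction n with
  | zero =>
    intro W a b hn h
    have := h.ne_nil
    simp at hn; contradiction
  | succ n ih =>
    intro W a b hn h ha hb
    by_cases h1 : ∃ x ∈ W, x ∈ A ∧ x ≠ a
    · obtain ⟨x, hx, hxA, hxa⟩ := h1
      obtain ⟨X, Y, rfl⟩ := List.append_of_mem hx
      have hX : X ≠ [] := by
        rintro rfl; have := h.1; simp at this; exact hxa this
      have : 0 < X.length := List.length_pos_iff.2 hX
      obtain ⟨a', ha', b', hb', W', hW', hs, hr⟩ := ih (x :: Y) x b (by simp at hn ⊢; omega)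
        h.split.2 hxA hb
      exact ⟨a', ha', b', hb', W', hW', fun z hz => by
        have := hs z hz; rw [List.mem_append]; exact Or.inr this, hr⟩
    · by_cases h2 : ∃ x ∈ W, x ∈ B ∧ x ≠ b
      · obtain ⟨x, hx, hxA, hxa⟩ := h2
        obtain ⟨X, Y, rfl⟩ := List.append_of_mem hx
        have hX : Y ≠ [] := by
          rintro rfl; have := h.2.1; simp at this; exact hxa this
        have : 0 < Y.length := List.length_pos_iff.2 hX
        obtain ⟨a', ha', b', hb', W', hW', hs, hr⟩ := ih (X ++ [x]) a x (by simp at hn ⊢; omega)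
          h.split.1 ha hxA
        exact ⟨a', ha', b', hb', W', hW', fun z hz => by
          have := hs z hz; simp at this ⊢; tauto, hr⟩
      · push Not at h1 h2
        exact ⟨a, ha, b, hb, W, h, fun _ h => h, fun x hx => ⟨h1 x hx, h2 x hx⟩⟩

theorem walk_pth {G : SimpleGraph V} {S : Set V} (hS : (G.induce S).Preconnected) {a b : V}
    (ha : a ∈ S) (hb : b ∈ S) : ∃ W, Pth G a b W ∧ ∀ x ∈ W, x ∈ S := by
  classical
  obtain ⟨p, hp⟩ := (hS ⟨a, ha⟩ ⟨b, hb⟩).exists_isPath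
  refine ⟨p.support.map Subtype.val, ⟨?_, ?_, ?_, ?_⟩, ?_⟩
  · rw [List.head?_map, List.head?_eq_some_head p.support_ne_nil, p.head_support]; rfl
  · rw [List.getLast?_map, List.getLast?_eq_some_getLast p.support_ne_nil, p.getLast_support]; rfl
  · exact hp.support_nodup.map Subtype.val_injective
  · rw [List.isChain_map]
    exact p.isChain_adj_support.imp (fun _ _ h => h)
  · intro x hx
    simp at hx
    exact hx.1

theorem link {G : SimpleGraph V} (hG : ∀ r : V, (G.induce ({r}ᶜ : Set V)).Preconnected)
    (A B : Set V) (hAB : ∀ x ∈ A, x ∉ B) (r a b : V) (ha : a ∈ A) (hb : b ∈ B)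
    (hrA : r ∉ A) (hrB : r ∉ B) :
    ∃ a ∈ A, ∃ b ∈ B, ∃ W, Pth G a b W ∧ r ∉ W ∧ ∀ x ∈ W, (x ∈ A → x = a) ∧
      (x ∈ B → x = b) := by
  obtain ⟨W, hW, hr⟩ := walk_pth (hG r) (a := a) (b := b) (by rintro rfl; exact hrA ha)
    (by rintro rfl; exact hrB hb)
  obtain ⟨a', ha', b', hb', W', h1, h2, h3⟩ := link_aux A B hAB _ W a b le_rfl hW ha hb
  exact ⟨a', ha', b', hb', W', h1, fun h => hr r (h2 r h) rfl, h3⟩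

/-- every vertex of `D` is reached from `r` by a path inside `D` with at least `k` vertices -/
def Good (G : SimpleGraph V) (k : ℕ) (D : Set V) (r : V) : Prop :=
  r ∈ D ∧ ∀ w ∈ D, w ≠ r → ∃ P, Pth G r w P ∧ (∀ x ∈ P, x ∈ D) ∧ k ≤ P.length

theorem glue_len {G : SimpleGraph V} {v w : V} {P Q : List V} (h : Pth G v w Q) :
    (P ++ Q.tail).length + 1 = P.length + Q.length := by
  have := List.length_pos_iff.2 h.ne_nil
  simp; omega

theorem ear_exists {G : SimpleGraph V} (hG : ∀ r : V, (G.induce ({r}ᶜ : Set V)).Preconnected)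
    (C : Set V) (k n : ℕ) (hC : ∀ r, ∃ c ∈ C, c ≠ r) :
    ∀ (D : Set V) (r c0 : V) (T : List V), T.length ≤ n → Good G k D r → (∃ w ∈ D, w ≠ r) →
      c0 ∈ C → Pth G c0 r T → (∀ x ∈ T, x ∈ C → x = c0) → (∀ x ∈ T, x ∈ D → x = r) →
      (∀ x ∈ D, x ∈ C → x = r) →
      ∃ c0 ∈ C, ∃ z ∈ C, z ≠ c0 ∧ ∃ R, Pth G c0 z R ∧ (∀ x ∈ R, x ∈ C → x = c0 ∨ x = z) ∧
        k + 1 ≤ R.length := by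
  induction n with
  | zero =>
    intro D r c0 T hn _ _ _ h
    have := h.ne_nil
    simp at hn; contradiction
  | succ n ih =>
    intro D r c0 T hn hD hw hc0 hT hTC hTD hDC
    obtain ⟨w, hwD, hwr⟩ := hw
    obtain ⟨c, hcC, hcr⟩ := hC r
    obtain ⟨a, ha, b, hb, W, hW, hrW, hWW⟩ := link hG {x | x ∈ D ∧ x ≠ r}
      {x | (x ∈ C ∨ x ∈ T) ∧ x ≠ r} (by
        rintro x ⟨h1, h2⟩ ⟨h3 | h3, h4⟩
        · exact h2 (hDC x h1 h3)
        · exact h2 (hTD x h3 h1)) r w c ⟨hwD, hwr⟩ ⟨Or.inl hcC, hcr⟩ (by simp) (by simp)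
    obtain ⟨haD, har⟩ := ha
    obtain ⟨hbCT, hbr⟩ := hb
    have hWD : ∀ x ∈ W, x ∈ D → x = a := fun x hx hxD =>
      (hWW x hx).1 ⟨hxD, by rintro rfl; exact hrW hx⟩
    have hWC : ∀ x ∈ W, x ∈ C → x = b := fun x hx hxD =>
      (hWW x hx).2 ⟨Or.inl hxD, by rintro rfl; exact hrW hx⟩
    have hWT : ∀ x ∈ W, x ∈ T → x = b := fun x hx hxD =>
      (hWW x hx).2 ⟨Or.inr hxD, by rintro rfl; exact hrW hx⟩
    obtain ⟨P, hP, hPD, hPk⟩ := hD.2 a haD har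
    by_cases hbC : b ∈ C ∧ b ≠ c0
    · have g1 := hT.glue hP (fun x hx hx' => hTD x hx (hPD x hx'))
      have g1m := hT.glue_mem hP
      have hbT : b ∉ T := fun h => hbC.2 (hTC b h hbC.1)
      have g2 := g1.glue hW (by
        intro x hx hxW
        rw [g1m] at hx
        rcases hx with hx | hx
        · have := hWT x hxW hx; subst this; exact absurd hx hbT
        · exact hWD x hxW (hPD x hx))
      have g2m := g1.glue_mem hW
      refine ⟨c0, hc0, b, hbC.1, hbC.2, _, g2, ?_, ?_⟩
      · intro x hx hxC
        rw [g2m, g1m] at hx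
        rcases hx with (hx | hx) | hx
        · exact Or.inl (hTC x hx hxC)
        · have := hDC x (hPD x hx) hxC
          subst this
          exact Or.inl (hTC x hT.snd_mem hxC)
        · exact Or.inr (hWC x hx hxC)
      · have l1 := glue_len (P := T) hP
        have l2 := glue_len (P := T ++ P.tail) hW
        have l3 : 0 < T.length := List.length_pos_iff.2 hT.ne_nil
        have l4 : 2 ≤ W.length := by
          have hab : a ≠ b := by
            rintro rfl; exact har (hDC a haD hbC.1)
          match W, hW with
          | [], hW => exact absurd rfl hW.ne_nil
          | [x], hW =>
            have h1 := hW.1; have h2 := hW.2.1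
            simp at h1 h2; exact absurd (h1.symm.trans h2) hab
          | _ :: _ :: _, _ => simp
        omega
    · have hbT : b ∈ T := by
        rcases hbCT with h | h
        · have : b = c0 := by tauto
          subst this; exact hT.fst_mem
        · exact h
      obtain ⟨T1, T2, rfl⟩ := List.append_of_mem hbT
      obtain ⟨hT1, hS⟩ := hT.split
      have hnd := hT.2.2.1
      have hT2 : T2 ≠ [] := by
        rintro rfl; have := hS.2.1; simp at this; exact hbr this
      have hrT2 : r ∈ T2 := by
        have := hS.snd_mem
        simp only [List.mem_cons] at this
        exact this.resolve_left (Ne.symm hbr)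
      have hT2C : ∀ x ∈ T2, x ∉ C := by
        intro x hx hxC
        have h1 := hTC x (by simp [hx]) hxC
        have h2 := hT1.fst_mem
        rw [← h1] at h2
        simp only [List.nodup_append, List.nodup_cons, List.mem_cons, List.mem_append,
          List.not_mem_nil, or_false] at hnd h2
        grind
      have hbT2 : b ∉ T2 := by
        have := (List.nodup_append.1 hnd).2.1
        rw [List.nodup_cons] at this; exact this.1
      have hlen2 : 0 < T2.length := List.length_pos_iff.2 hT2
      have hST : ∀ x ∈ b :: T2, x ∈ T1 ++ b :: T2 := fun x hx => by
        rw [List.mem_append]; exact Or.inr hx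
      have hbD : b ∉ D := fun h => hbr (hTD b hbT h)
      have hSP : ∀ w ∈ D, ∀ P' : List V, (∀ x ∈ P', x ∈ D) → ∀ x ∈ b :: T2, x ∈ P' → x = r :=
        fun w hw P' hP' x hx hx' => hTD x (hST x hx) (hP' x hx')
      set D' : Set V := {x | x ∈ D ∨ x ∈ T2 ∨ x ∈ W} with hD'
      refine ih D' b c0 (T1 ++ [b]) (by simp at hn ⊢; omega) ⟨?_, ?_⟩ ?_ hc0 hT1 ?_ ?_ ?_
      · exact Or.inr (Or.inr hW.snd_mem)
      · intro w' hw' hw'b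
        by_cases hc1 : w' ∈ D ∧ w' ≠ r
        · obtain ⟨P', hP', hP'D, hP'k⟩ := hD.2 w' hc1.1 hc1.2
          refine ⟨_, hS.glue hP' (hSP w' hc1.1 P' hP'D), ?_, ?_⟩
          · intro x hx
            rw [hS.glue_mem hP', List.mem_cons] at hx
            rcases hx with (rfl | hx) | hx
            · exact Or.inr (Or.inr hW.snd_mem)
            · exact Or.inr (Or.inl hx)
            · exact Or.inl (hP'D x hx)
          · have := glue_len (P := b :: T2) hP'
            simp only [List.length_cons] at this; omega
        by_cases hc2 : w' ∈ T2
        · obtain ⟨X, Y, rfl⟩ := List.append_of_mem hc2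
          have hS' : Pth G w' r (w' :: Y) := (Pth.split (X := b :: X) hS).2
          have hYT : ∀ x ∈ w' :: Y, x ∈ X ++ w' :: Y := fun x hx => by
            rw [List.mem_append]; exact Or.inr hx
          have g1 := hW.rev.glue hP.rev (by
            intro x hx hx'
            rw [List.mem_reverse] at hx hx'
            exact hWD x hx (hPD x hx'))
          have g1m := hW.rev.glue_mem hP.rev
          have g2 := g1.glue hS'.rev (by
            intro x hx hx'
            rw [List.mem_reverse] at hx'
            rw [g1m, List.mem_reverse, List.mem_reverse] at hx
            have hxT2 := hYT x hx'
            rcases hx with hx | hx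
            · have := hWT x hx (hST x (List.mem_cons_of_mem _ hxT2))
              subst this; exact absurd hxT2 hbT2
            · exact hTD x (hST x (List.mem_cons_of_mem _ hxT2)) (hPD x hx))
          have g2m := g1.glue_mem hS'.rev
          refine ⟨_, g2, ?_, ?_⟩
          · intro x hx
            rw [g2m, g1m, List.mem_reverse, List.mem_reverse, List.mem_reverse] at hx
            rcases hx with (hx | hx) | hx
            · exact Or.inr (Or.inr hx)
            · exact Or.inl (hPD x hx)
            · exact Or.inr (Or.inl (hYT x hx))
          · have l1 := glue_len (P := W.reverse) hP.rev
            have l2 := glue_len (P := W.reverse ++ P.reverse.tail) hS'.rev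
            have l3 : 0 < W.length := List.length_pos_iff.2 hW.ne_nil
            simp only [List.length_reverse, List.length_cons] at l1 l2
            omega
        · have hw'W : w' ∈ W := by
            rcases hw' with h | h | h
            · have : w' = r := by tauto
              subst this; exact absurd hrT2 hc2
            · exact absurd h hc2
            · exact h
          obtain ⟨X, Y, hXY⟩ := List.append_of_mem hw'W
          have hW1 : Pth G a w' (X ++ [w']) := by
            rw [hXY] at hW; exact hW.split.1
          have hXW : ∀ x ∈ X ++ [w'], x ∈ W := by
            intro x hx; rw [hXY]; simp at hx ⊢; tauto
          have hbX : b ∉ X ++ [w'] := by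
            intro hb
            have h1 := hW.2.2.1
            have h2 := hW.2.1
            rw [hXY] at h1 h2
            rw [List.getLast?_append_of_ne_nil _ (by simp)] at h2
            have h3 := List.mem_of_mem_getLast? h2
            simp only [List.nodup_append, List.nodup_cons, List.mem_cons, List.mem_append,
              List.not_mem_nil, or_false] at h1 h3 hb
            grind
          have g1 := hS.glue hP (hSP a haD P hPD)
          have g1m := hS.glue_mem hP
          have g2 := g1.glue hW1 (by
            intro x hx hx'
            rw [g1m] at hx
            rcases hx with hx | hx
            · have := hWT x (hXW x hx') (hST x hx)
              subst this; exact absurd hx' hbX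
            · exact hWD x (hXW x hx') (hPD x hx))
          have g2m := g1.glue_mem hW1
          refine ⟨_, g2, ?_, ?_⟩
          · intro x hx
            rw [g2m, g1m, List.mem_cons] at hx
            rcases hx with ((rfl | hx) | hx) | hx
            · exact Or.inr (Or.inr hW.snd_mem)
            · exact Or.inr (Or.inl hx)
            · exact Or.inl (hPD x hx)
            · exact Or.inr (Or.inr (hXW x hx))
          · have l1 := glue_len (P := b :: T2) hP
            have l2 := glue_len (P := (b :: T2) ++ P.tail) hW1
            simp only [List.length_cons, List.length_append, List.length_nil] at l1 l2 ⊢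
            omega
      · exact ⟨r, Or.inl hD.1, Ne.symm hbr⟩
      · intro x hx hxC
        refine hTC x ?_ hxC
        simp at hx ⊢; tauto
      · intro x hx hxD'
        have hxT : x ∈ T1 ++ b :: T2 := by simp at hx ⊢; tauto
        have hxT2 : x ∉ T2 := by
          intro h
          simp only [List.nodup_append, List.nodup_cons, List.mem_cons, List.mem_append,
            List.not_mem_nil, or_false] at hnd hx
          grind
        rcases hxD' with h | h | h
        · have := hTD x hxT h; subst this; exact absurd hrT2 hxT2
        · exact absurd h hxT2
        · exact hWT x h hxT
      · intro x hx hxC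
        rcases hx with h | h | h
        · have := hDC x h hxC; subst this; exact absurd hxC (hT2C _ hrT2)
        · exact absurd hxC (hT2C _ h)
        · exact hWC x h hxC

end Niko
namespace Niko

theorem exists_longest [Fintype V] (P : List V → Prop) (hn : ∀ l, P l → l.Nodup) (he : ∃ l, P l) :
    ∃ l, P l ∧ ∀ l', P l' → l'.length ≤ l.length := by
  set S : Set ℕ := {n | ∃ l, P l ∧ l.length = n} with hS
  have hne : S.Nonempty := by
    obtain ⟨l, hl⟩ := he; exact ⟨l.length, l, hl, rfl⟩
  have hb : BddAbove S := by
    refine ⟨Fintype.card V, ?_⟩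
    rintro n ⟨l, hl, rfl⟩
    exact (hn l hl).length_le_card
  obtain ⟨l, hl, hlen⟩ := Nat.sSup_mem hne hb
  exact ⟨l, hl, fun l' hl' => by rw [hlen]; exact le_csSup hb ⟨l', hl', rfl⟩⟩

theorem first_split (p : V → Prop) (Q : List V) (h : ∃ x ∈ Q, p x) :
    ∃ Q1 x Q2, Q = Q1 ++ x :: Q2 ∧ p x ∧ ∀ y ∈ Q1, ¬ p y := by
  induction Q with
  | nil => simp at h
  | cons a Q ih =>
    by_cases ha : p a
    · exact ⟨[], a, Q, rfl, ha, by simp⟩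
    · obtain ⟨Q1, x, Q2, rfl, h1, h2⟩ := ih (by
        obtain ⟨x, hx, hpx⟩ := h
        rw [List.mem_cons] at hx
        rcases hx with rfl | hx
        · exact absurd hpx ha
        · exact ⟨x, hx, hpx⟩)
      refine ⟨a :: Q1, x, Q2, rfl, h1, ?_⟩
      intro y hy
      rw [List.mem_cons] at hy
      rcases hy with rfl | hy
      · exact ha
      · exact h2 y hy

theorem last_split (p : V → Prop) (Q : List V) (h : ∃ x ∈ Q, p x) :
    ∃ Q1 x Q2, Q = Q1 ++ x :: Q2 ∧ p x ∧ ∀ y ∈ Q2, ¬ p y := by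
  obtain ⟨Q1, x, Q2, h1, h2, h3⟩ := first_split p Q.reverse (by simpa using h)
  refine ⟨Q2.reverse, x, Q1.reverse, ?_, h2, by simpa using h3⟩
  rw [← List.reverse_reverse Q, h1]; simp

theorem deg_le [Fintype V] [DecidableEq V] (G : SimpleGraph V) [DecidableRel G.Adj] {v : V}
    {T : Finset V} (h : ∀ w, G.Adj v w → w ∈ T) : G.degree v ≤ T.card := by
  rw [← G.card_neighborFinset_eq_degree]
  apply Finset.card_le_card
  intro w hw; exact h w (by simpa using hw)

theorem deg_succ_le [Fintype V] [DecidableEq V] (G : SimpleGraph V) [DecidableRel G.Adj] {v : V}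
    {L : List V} (hv : v ∈ L) (h : ∀ w, G.Adj v w → w ∈ L) : G.degree v + 1 ≤ L.length := by
  refine le_trans ?_ (List.toFinset_card_le L)
  rw [← G.card_neighborFinset_eq_degree, ← Finset.card_insert_of_notMem (a := v) (by simp)]
  apply Finset.card_le_card
  intro w hw
  simp at hw ⊢
  rcases hw with rfl | hw
  · exact hv
  · exact h w hw

theorem end_good [Fintype V] [DecidableEq V] (G : SimpleGraph V) [DecidableRel G.Adj] {u q : V}
    {Q : List V} (h : Pth G u q Q) (hN : ∀ w, G.Adj q w → w ∈ Q) {d : ℕ} (hd : d ≤ G.degree q)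
    (hd1 : 1 ≤ d) :
    ∃ Q1 r Q2, Q = Q1 ++ r :: Q2 ∧ G.Adj q r ∧ q ∈ Q2 ∧ d + 1 ≤ (r :: Q2).length ∧
      Good G (d + 1) {x | x ∈ r :: Q2} r := by
  have hex : ∃ x ∈ Q, G.Adj q x := by
    have : 0 < G.degree q := by omega
    rw [G.degree_pos_iff_exists_adj] at this
    obtain ⟨w, hw⟩ := this
    exact ⟨w, hN w hw, hw⟩
  obtain ⟨Q1, r, Q2, rfl, hr, hQ1⟩ := first_split _ Q hex
  have hS := h.split.2
  have hqr : q ≠ r := hr.ne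
  have hq : q ∈ Q2 := by
    have := hS.snd_mem
    rw [List.mem_cons] at this; tauto
  have hN2 : ∀ w, G.Adj q w → w ∈ r :: Q2 := by
    intro w hw
    have := hN w hw
    rw [List.mem_append] at this
    exact this.resolve_left (fun h => hQ1 w h hw)
  refine ⟨Q1, r, Q2, rfl, hr, hq, ?_, by simp, ?_⟩
  · have := deg_succ_le G (v := q) (L := r :: Q2) (by simp [hq]) hN2
    omega
  intro w hw hwr
  have hw2 : w ∈ Q2 := by
    simp only [Set.mem_setOf_eq, List.mem_cons] at hw; tauto
  obtain ⟨M1, M2, rfl⟩ := List.append_of_mem hw2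
  obtain ⟨N1, s, N2, hNs, hs, hN2'⟩ := last_split (fun x => G.Adj q x) (r :: M1) ⟨r, by simp, hr⟩
  have hS2 : Pth G w q (w :: M2) := (Pth.split (X := r :: M1) hS).2
  have heq : r :: (M1 ++ w :: M2) = N1 ++ s :: (N2 ++ w :: M2) := by
    rw [← List.cons_append, hNs]; simp
  have hS' := hS
  rw [heq] at hS'
  have hS1 : Pth G r s (N1 ++ [s]) := hS'.split.1
  have hnd := hS'.2.2.1
  have hr2 := hS2.rev
  refine ⟨(N1 ++ [s]) ++ (w :: M2).reverse, ⟨?_, ?_, ?_, ?_⟩, ?_, ?_⟩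
  · rw [List.head?_append_of_ne_nil _ (by simp)]; exact hS1.1
  · rw [List.getLast?_append_of_ne_nil _ (by simp)]; exact hr2.2.1
  · rw [List.nodup_append]
    refine ⟨hS1.2.2.1, hr2.2.2.1, ?_⟩
    intro a ha b hb
    simp only [List.nodup_append, List.nodup_cons, List.mem_cons, List.mem_append,
      List.not_mem_nil, or_false, List.mem_reverse] at hnd ha hb
    grind
  · rw [List.isChain_append]
    refine ⟨hS1.2.2.2, hr2.2.2.2, ?_⟩
    rw [hS1.2.1, hr2.1]
    intro x hx y hy
    simp at hx hy; subst hx; subst hy; exact hs.symm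
  · intro x hx
    show x ∈ r :: (M1 ++ w :: M2)
    rw [heq]
    simp at hx ⊢; tauto
  · refine le_trans (Nat.add_le_add_right hd 1) (deg_succ_le G ?_ ?_)
    · rw [List.mem_append]; right; exact hr2.fst_mem
    · intro x hx
      have h1 := hN2 x hx
      rw [heq] at h1
      have h2 : x ∉ N2 := fun h => hN2' x h hx
      simp at h1 ⊢; tauto

/-- an ear of the cycle `l` -/
def Ear (G : SimpleGraph V) (l : List V) (u v : V) (e : List V) : Prop :=
  e ≠ [] ∧ e.Nodup ∧ (∀ x ∈ e, x ∉ l) ∧ (u :: (e ++ [v])).IsChain G.Adj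

theorem Ear.symm {G : SimpleGraph V} {l : List V} {u v : V} {e : List V} (h : Ear G l u v e) :
    Ear G l v u e.reverse := by
  obtain ⟨h1, h2, h3, h4⟩ := h
  refine ⟨by simpa, by simpa, by simpa, ?_⟩
  have : v :: (e.reverse ++ [u]) = (u :: (e ++ [v])).reverse := by simp
  rw [this, List.isChain_reverse]
  exact h4.imp (fun _ _ h => h.symm)

theorem cyc_gap [DecidableEq V] {G : SimpleGraph V} {l : List V} (h : MaxCyc G l) (X Y : Finset V)
    (hX : ∀ x ∈ X, x ∈ l) (hY : ∀ y ∈ Y, y ∈ l) (L : ℕ) (hL : 2 ≤ L) (x y : V) (hx : x ∈ X)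
    (hy : y ∈ Y) (hxy : x ≠ y)
    (he : ∀ u ∈ X ∪ Y, ∀ v ∈ X ∪ Y, u ≠ v → ∃ e, Ear G l u v e)
    (heL : ∀ u ∈ X, ∀ v ∈ Y, u ≠ v → ∃ e, Ear G l u v e ∧ L ≤ e.length + 1) :
    ∃ m, 2 ≤ m ∧ (X ∩ Y).card ≤ m ∧ 2 * (X ∪ Y).card + (L - 2) * m ≤ l.length := by
  obtain ⟨A, B, hAB⟩ := List.append_of_mem (hX x hx)
  set l' := x :: B ++ A with hl'
  have hmem : ∀ v, v ∈ l' ↔ v ∈ l := by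
    intro v; rw [hAB, hl', List.mem_append, List.mem_append]; tauto
  have hlen : l'.length = l.length := by rw [hAB, hl']; simp; omega
  have h' : MaxCyc G l' := by rw [hAB] at h; exact maxCyc_rot h
  have hE : ∀ u v e, Ear G l u v e → Ear G l' u v e := by
    rintro u v e ⟨h1, h2, h3, h4⟩
    exact ⟨h1, h2, fun x hx => by rw [hmem]; exact h3 x hx, h4⟩
  set f : V → ℕ := fun v => l'.idxOf v with hf
  have hfl : ∀ v ∈ l, f v < l'.length := fun v hv =>
    List.idxOf_lt_length_of_mem ((hmem v).2 hv)
  have hfg : ∀ v (hv : v ∈ l), l'[f v]'(hfl v hv) = v := fun v hv => List.getElem_idxOf _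
  have hinj : Set.InjOn f {v | v ∈ l} := by
    intro a ha b hb hab
    rw [← hfg a ha, ← hfg b hb]
    simp only [hab]
  have hfx : f x = 0 := by simp [hf, hl']
  have hU : ∀ v ∈ X ∪ Y, v ∈ l := by
    intro v hv; rw [Finset.mem_union] at hv; exact hv.elim (hX v) (hY v)
  have hear : ∀ u ∈ l, ∀ v ∈ l, ∀ e, Ear G l u v e → f u < f v → f u + e.length + 1 ≤ f v := by
    intro u hu v hv e hE' hlt
    obtain ⟨h1, h2, h3, h4⟩ := hE u v e hE'
    refine ear_gap h' hlt (hfl v hv) h1 h2 h3 ?_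
    rw [hfg u hu, hfg v hv]; exact h4
  have hearc : ∀ u ∈ l, ∀ e, Ear G l u x e → 0 < f u → f u + e.length + 1 ≤ l.length := by
    intro u hu e hE' hlt
    obtain ⟨h1, h2, h3, h4⟩ := hE u x e hE'
    rw [← hlen]
    refine ear_gap_wrap h' hlt (hfl u hu) h1 h2 h3 ?_
    rw [hfg u hu]; simpa [hl'] using h4
  have hfp : ∀ v ∈ l, v ≠ x → 0 < f v := by
    intro v hv hvx
    rcases Nat.eq_zero_or_pos (f v) with h0 | h0
    · exact absurd (hinj hv (hX x hx) (h0.trans hfx.symm)) hvx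
    · exact h0
  have hpos : ∀ e u v, Ear G l u v e → 1 ≤ e.length := fun e u v h => List.length_pos_iff.2 h.1
  have key := gap_count l.length L hL (X.image f) (Y.image f)
    (Finset.mem_image.2 ⟨x, hx, hfx⟩) (f y) (Finset.mem_image_of_mem f hy)
    (hfp y (hY y hy) hxy.symm) (by
      rw [← Finset.image_union]
      intro i hi j hj hij
      obtain ⟨u, hu, rfl⟩ := Finset.mem_image.1 hi
      obtain ⟨v, hv, rfl⟩ := Finset.mem_image.1 hj
      obtain ⟨e, hE'⟩ := he u hu v hv (by rintro rfl; omega)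
      have := hear u (hU u hu) v (hU v hv) e hE' hij
      have := hpos _ _ _ hE'
      omega) (by
      rw [← Finset.image_union]
      intro i hi
      obtain ⟨u, hu, rfl⟩ := Finset.mem_image.1 hi
      by_cases hux : u = x
      · rw [hux, hfx]
        have := h.1.2.1; omega
      · obtain ⟨e, hE'⟩ := he u hu x (Finset.mem_union_left _ hx) hux
        have := hearc u (hU u hu) e hE' (hfp u (hU u hu) hux)
        have := hpos _ _ _ hE'
        omega) (by
      intro i hi j hj hij
      obtain ⟨u, hu, rfl⟩ := Finset.mem_image.1 hi
      obtain ⟨v, hv, rfl⟩ := Finset.mem_image.1 hj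
      obtain ⟨e, hE', hLe⟩ := heL u hu v hv (by rintro rfl; omega)
      have := hear u (hX u hu) v (hY v hv) e hE' hij
      omega) (by
      intro i hi j hj hij
      obtain ⟨u, hu, rfl⟩ := Finset.mem_image.1 hi
      obtain ⟨v, hv, rfl⟩ := Finset.mem_image.1 hj
      obtain ⟨e, hE', hLe⟩ := heL v hv u hu (by rintro rfl; omega)
      have := hear u (hY u hu) v (hX v hv) _ hE'.symm hij
      rw [List.length_reverse] at this
      omega) (by
      intro i hi hi0
      obtain ⟨u, hu, rfl⟩ := Finset.mem_image.1 hi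
      obtain ⟨e, hE', hLe⟩ := heL x hx u hu (by rintro rfl; omega)
      have := hearc u (hY u hu) _ hE'.symm hi0
      rw [List.length_reverse] at this
      omega)
  rw [← Finset.image_union, ← Finset.image_inter_of_injOn, Finset.card_image_of_injOn,
    Finset.card_image_of_injOn] at key
  · exact key
  · exact hinj.mono (fun v hv => hU v hv)
  · exact hinj.mono (fun v hv => hX v (Finset.mem_inter.1 hv).1)
  · refine hinj.mono (fun v hv => hU v (by simpa using hv))

end Niko
namespace Niko

theorem cyc_ham [Fintype V] [DecidableEq V] {G : SimpleGraph V} {l : List V} (h : Cyc G l)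
    (hl : ∀ v, v ∈ l) : G.IsHamiltonian := by
  obtain ⟨hn, h3, hc, hlast⟩ := h
  have hne : l ≠ [] := by rintro rfl; simp at h3
  intro _
  have hadj : G.Adj (l.getLast hne) (l.head hne) :=
    hlast _ (List.getLast_mem_getLast? hne) _ (List.head_mem_head? hne)
  have hlen : l.length = Fintype.card V := by
    rw [← List.toFinset_card_of_nodup hn, ← Finset.card_univ]
    congr 1
    ext v; simp [hl v]
  refine ⟨_, Walk.cons hadj (Walk.ofSupport l hne hc), ?_⟩
  rw [Walk.isHamiltonianCycle_iff_isCycle_and_length_eq, Walk.isCycle_iff_isPath_tail_and_le_length]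
  have e : (Walk.cons hadj (Walk.ofSupport l hne hc)).length = l.length := by
    rw [Walk.length_cons, Walk.length_ofSupport]; omega
  refine ⟨⟨?_, by omega⟩, by omega⟩
  simp only [Walk.getVert_cons_succ, Walk.tail_cons, Walk.isPath_copy]
  rw [Walk.isPath_def, Walk.support_ofSupport]
  exact hn

theorem exists_maxCyc [Fintype V] [DecidableEq V] [Nonempty V] (G : SimpleGraph V)
    [DecidableRel G.Adj] (d : ℕ) (hd : ∀ v, d ≤ G.degree v) (h2 : 2 ≤ d) :
    ∃ l, MaxCyc G l := by
  have hex : ∃ l, Cyc G l := by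
    obtain ⟨Q, ⟨hne, hn, hc⟩, hmax⟩ := exists_longest
      (fun Q : List V => Q ≠ [] ∧ Q.Nodup ∧ Q.IsChain G.Adj) (fun _ h => h.2.1)
      ⟨[Classical.arbitrary V], by simp⟩
    have hN : ∀ w, G.Adj (Q.getLast hne) w → w ∈ Q := by
      intro w hw
      by_contra hwQ
      have := hmax (Q ++ [w]) ⟨by simp, by
        rw [List.nodup_append]; refine ⟨hn, by simp, ?_⟩
        intro a ha b hb; simp at hb; rintro rfl; exact hwQ (hb ▸ ha), by
        rw [List.isChain_append]
        refine ⟨hc, by simp, ?_⟩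
        intro x hx y hy
        rw [List.getLast?_eq_getLast_of_ne_nil hne] at hx
        simp at hx hy; subst hx; subst hy; exact hw⟩
      simp at this
    have hP : Pth G (Q.head hne) (Q.getLast hne) Q :=
      ⟨List.head?_eq_some_head hne, List.getLast?_eq_getLast_of_ne_nil hne, hn, hc⟩
    obtain ⟨Q1, r, Q2, hQ, hqr, hqm, hlen, -⟩ := end_good G hP hN (hd _) (by omega)
    refine ⟨r :: Q2, ?_, by omega, ?_, ?_⟩
    · rw [hQ, List.nodup_append] at hn; exact hn.2.1
    · rw [hQ, List.isChain_append] at hc; exact hc.2.1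
    · intro a ha b hb
      have h1 : Q.getLast? = some a := by
        rw [hQ, List.getLast?_append_of_ne_nil _ (by simp)]; exact ha
      rw [hP.2.1] at h1
      simp at h1 hb
      subst h1; subst hb; exact hqr
  obtain ⟨l, h1, h2⟩ := exists_longest (Cyc G) (fun _ h => h.1) hex
  exact ⟨l, h1, h2⟩

theorem indep_set [Fintype V] [DecidableEq V] (G : SimpleGraph V)
    [DecidableRel G.Adj] {l : List V} (h : MaxCyc G l) {v : V} (hv : v ∉ l)
    (hN : ∀ w, G.Adj v w → w ∈ l) (h1 : 1 ≤ G.degree v) :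
    ∃ I : Finset V, (∀ a ∈ I, ∀ b ∈ I, ¬ G.Adj a b) ∧ G.degree v + 1 ≤ I.card := by
  obtain ⟨w0, hw0⟩ : ∃ w, G.Adj v w := by
    rw [Nat.one_le_iff_ne_zero, ← Nat.pos_iff_ne_zero, G.degree_pos_iff_exists_adj] at h1
    exact h1
  obtain ⟨A, B, hAB⟩ := List.append_of_mem (hN _ hw0)
  subst hAB
  have h' := maxCyc_rot h
  have hv' : v ∉ (w0 :: B) ++ A := by simp at hv ⊢; tauto
  have hN' : ∀ w, G.Adj v w → w ∈ (w0 :: B) ++ A := by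
    intro w hw; have := hN w hw; simp at this ⊢; tauto
  have h0 : ((w0 :: B) ++ A).head? = some w0 := by simp
  generalize (w0 :: B) ++ A = l at h' hv' hN' h0
  clear hN hv h
  have h3 := h'.1.2.1
  have hnd := h'.1.1
  have hl0 : l[0] = w0 := by
    rw [List.head?_eq_getElem?, List.getElem?_eq_getElem (by omega)] at h0; simpa using h0
  have hi1 : ∀ i (hi : i < l.length), G.Adj v l[i] → i + 1 < l.length := by
    intro i hi ha
    rcases Nat.eq_zero_or_pos i with rfl | hp
    · omega
    · have := ear_gap_wrap h' hp hi (e := [v]) (by simp) (by simp) (by simpa using hv')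
        (by simp [ha.symm, hl0, hw0])
      simpa using this
  let J : Finset ℕ := (G.neighborFinset v).image (fun w => l.idxOf w)
  have hJ : ∀ i ∈ J, ∃ hi : i < l.length, G.Adj v l[i] := by
    intro i hi
    simp only [J, Finset.mem_image, mem_neighborFinset] at hi
    obtain ⟨w, hw, rfl⟩ := hi
    have hlt := List.idxOf_lt_length_of_mem (hN' w hw)
    exact ⟨hlt, by simpa using hw⟩
  have hJc : J.card = G.degree v := by
    rw [Finset.card_image_of_injOn, card_neighborFinset_eq_degree]
    intro a ha b hb hab
    simp at ha hb
    exact (List.idxOf_inj (hN' a ha)).1 hab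
  let K : Finset V := J.image (fun i => l.getD (i+1) v)
  have hK : ∀ x ∈ K, ∃ i, ∃ hi : i + 1 < l.length, G.Adj v l[i] ∧ x = l[i+1] := by
    intro x hx
    simp only [K, Finset.mem_image] at hx
    obtain ⟨i, hi, rfl⟩ := hx
    obtain ⟨hlt, ha⟩ := hJ i hi
    have := hi1 i hlt ha
    exact ⟨i, this, ha, by simp [List.getD, List.getElem?_eq_getElem this]⟩
  have hKc : K.card = G.degree v := by
    rw [← hJc, Finset.card_image_of_injOn]
    intro i hi j hj hij
    obtain ⟨hi', hia⟩ := hJ i hi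
    obtain ⟨hj', hja⟩ := hJ j hj
    have hi2 := hi1 i hi' hia
    have hj2 := hi1 j hj' hja
    simp only [List.getD, List.getElem?_eq_getElem hi2, List.getElem?_eq_getElem hj2] at hij
    have := (hnd.getElem_inj_iff).1 (by simpa using hij)
    omega
  have hvK : v ∉ K := by
    intro hvK
    obtain ⟨i, hi, -, hx⟩ := hK v hvK
    exact hv' (hx ▸ List.getElem_mem _)
  have hvn : ∀ x ∈ K, ¬ G.Adj v x := by
    intro x hx hadj
    obtain ⟨i, hi, ha, rfl⟩ := hK x hx
    have := ear_gap h' (i := i) (j := i+1) (by omega) hi (e := [v]) (by simp) (by simp)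
      (by simpa using hv') (by simp [ha.symm, hadj])
    simp at this
  refine ⟨insert v K, ?_, by rw [Finset.card_insert_of_notMem hvK, hKc]⟩
  intro a ha b hb
  rw [Finset.mem_insert] at ha hb
  rcases ha with rfl | ha
  · rcases hb with rfl | hb
    · exact G.loopless.irrefl _
    · exact hvn b hb
  · rcases hb with rfl | hb
    · exact fun h => hvn a ha h.symm
    · obtain ⟨i, hi, hia, rfl⟩ := hK a ha
      obtain ⟨j, hj, hja, rfl⟩ := hK b hb
      rcases lt_trichotomy i j with hij | rfl | hij
      · exact cross h' hv' hij hj hia hja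
      · exact G.loopless.irrefl _
      · exact fun h => cross h' hv' hij hi hja hia h.symm

theorem final_step [Fintype V] [DecidableEq V] (G : SimpleGraph V)
    [DecidableRel G.Adj] (d k : ℕ) (hd : ∀ v, d ≤ G.degree v) (hd1 : 1 ≤ d)
    (h3 : Fintype.card V + k ≤ 3 * d) (hk : ¬ KConnected G (k+1)) (I : Finset V)
    (hI : ∀ u ∈ I, ∀ v ∈ I, ¬ G.Adj u v) (hIc : d + 1 ≤ I.card) : False := by
  classical
  have hn : I.card + d ≤ Fintype.card V := by
    obtain ⟨v, hv⟩ : I.Nonempty := Finset.card_pos.1 (by omega)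
    have h1 : G.degree v ≤ Iᶜ.card :=
      deg_le G (fun w hw => by rw [Finset.mem_compl]; exact fun hwI => hI v hv w hwI hw)
    have := Finset.card_add_card_compl I
    have := hd v
    omega
  unfold KConnected at hk
  push Not at hk
  obtain ⟨S, hS, hconn⟩ := hk (by omega)
  have hSn : S.card < Fintype.card V := by omega
  obtain ⟨a, ha⟩ : ∃ a, a ∉ S := by
    by_contra hcon
    push Not at hcon
    have : S = Finset.univ := Finset.eq_univ_of_forall hcon
    rw [this, Finset.card_univ] at hSn; omega
  have hpre : ¬ (G.induce ((↑S : Set V)ᶜ)).Preconnected := by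
    intro hp
    exact hconn (by have : Nonempty ((↑S : Set V)ᶜ : Set V) := ⟨⟨a, by simpa using ha⟩⟩; exact ⟨hp⟩)
  unfold SimpleGraph.Preconnected at hpre
  push Not at hpre
  obtain ⟨x, y, hxy⟩ := hpre
  let A : Finset V := Finset.univ.filter
    (fun w => ∃ hw : w ∈ ((↑S : Set V)ᶜ), (G.induce ((↑S : Set V)ᶜ)).Reachable x ⟨w, hw⟩)
  let B : Finset V := Finset.univ.filter (fun w => w ∉ S ∧ w ∉ A)
  refine indep_cut G d hd S A B I ?_ ?_ ?_ ?_ ?_ ⟨x.1, ?_⟩ ⟨y.1, ?_⟩ hI hIc (by omega)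
  · intro a ha b hb hab
    simp only [A, B, Finset.mem_filter, Finset.mem_univ, true_and] at ha hb
    obtain ⟨ha1, ha2⟩ := ha
    apply hb.2
    refine ⟨by simpa using hb.1, ha2.trans (Adj.reachable ?_)⟩
    simpa using hab
  · rw [Finset.disjoint_left]
    intro w hw hwA
    simp only [A, Finset.mem_filter, Finset.mem_univ, true_and] at hwA
    obtain ⟨h, -⟩ := hwA
    exact h (by simpa using hw)
  · rw [Finset.disjoint_left]
    intro w hw hwB
    simp only [B, Finset.mem_filter, Finset.mem_univ, true_and] at hwB
    exact hwB.1 hw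
  · rw [Finset.disjoint_left]
    intro w hw hwB
    have := (Finset.mem_filter.1 hwB).2
    exact this.2 hw
  · intro v
    by_cases h1 : v ∈ S
    · exact Or.inl h1
    · by_cases h2 : v ∈ A
      · exact Or.inr (Or.inl h2)
      · exact Or.inr (Or.inr (Finset.mem_filter.2 ⟨Finset.mem_univ _, h1, h2⟩))
  · exact Finset.mem_filter.2 ⟨Finset.mem_univ _, x.2, Reachable.refl _⟩
  · refine Finset.mem_filter.2 ⟨Finset.mem_univ _, fun h => y.2 (by simpa using h), ?_⟩
    intro hyA
    obtain ⟨-, h, hr⟩ := Finset.mem_filter.1 hyA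
    exact hxy hr

end Niko
namespace Niko

/-- ears through a single outside vertex -/
theorem ear_single {G : SimpleGraph V} {l : List V} {q u v : V} (hq : q ∉ l) (hu : G.Adj q u)
    (hv : G.Adj q v) : Ear G l u v [q] :=
  ⟨by simp, by simp, by simpa using hq, by simp [hu.symm, hv]⟩

theorem exit_edge {G : SimpleGraph V} {l : List V} (hpre : G.Preconnected) {c v : V}
    (hc : c ∈ l) (hv : v ∉ l) : ∃ c0 ∈ l, ∃ x, x ∉ l ∧ G.Adj c0 x := by
  obtain ⟨p⟩ := hpre c v
  obtain ⟨d, -, h1, h2⟩ := p.exists_boundary_dart {x | x ∈ l} hc hv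
  exact ⟨d.fst, h1, d.snd, h2, d.adj⟩

theorem gl_snoc (a : V) (e : List V) (q : V) : (a :: (e ++ [q])).getLast? = some q := by
  rw [← List.cons_append, List.getLast?_concat]

theorem snoc_last {e : List V} (hne : e ≠ []) : ∃ e' q, e = e' ++ [q] :=
  ⟨e.dropLast, e.getLast hne, (List.dropLast_append_getLast hne).symm⟩

theorem dirac [Fintype V] [DecidableEq V] (G : SimpleGraph V) [DecidableRel G.Adj]
    (hG : ∀ r : V, (G.induce ({r}ᶜ : Set V)).Preconnected) (hpre : G.Preconnected) (d : ℕ)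
    (hd : ∀ v, d ≤ G.degree v) (hd1 : 1 ≤ d) {l : List V} (h : MaxCyc G l) {v : V} (hv : v ∉ l) :
    2 * d ≤ l.length := by
  have h3 := h.1.2.1
  have hlne : l ≠ [] := by rintro rfl; simp at h3
  obtain ⟨c1, hc1, x1, hx1, hcx1⟩ := exit_edge hpre (List.head_mem hlne) hv
  obtain ⟨e, ⟨hne, hel, c0, hc0, hnd, hch⟩, hmax⟩ := exists_longest
    (fun e : List V => e ≠ [] ∧ (∀ x ∈ e, x ∉ l) ∧ ∃ c0 ∈ l, (c0 :: e).Nodup ∧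
      (c0 :: e).IsChain G.Adj) (fun e he => by
        obtain ⟨-, -, c0, -, hn, -⟩ := he; exact (List.nodup_cons.1 hn).2)
    ⟨[x1], by simp, by simpa using hx1, c1, hc1, by
      simp; rintro rfl; exact hx1 hc1, by simpa using hcx1⟩
  obtain ⟨e', q, rfl⟩ := snoc_last hne
  have hql : q ∉ l := hel q (by simp)
  have hN : ∀ w, G.Adj q w → w ∈ e' ++ [q] ∨ w ∈ l := by
    intro w hw
    by_contra hcon
    push Not at hcon
    have hwc : w ≠ c0 := by rintro rfl; exact hcon.2 hc0
    have := hmax ((e' ++ [q]) ++ [w]) ⟨by simp, by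
        intro x hx; rw [List.mem_append] at hx
        rcases hx with hx | hx
        · exact hel x hx
        · simp at hx; subst hx; exact hcon.2, c0, hc0, by
        rw [← List.cons_append, List.nodup_append]
        refine ⟨hnd, by simp, ?_⟩
        intro a ha b hb hab
        simp only [List.mem_singleton] at hb
        subst hab; subst hb
        rw [List.mem_cons] at ha
        exact ha.elim hwc hcon.1, by
        rw [← List.cons_append, List.isChain_append]
        refine ⟨hch, by simp, ?_⟩
        intro x hx y hy
        rw [gl_snoc] at hx
        simp at hx hy
        subst hx; subst hy; exact hw⟩
    simp at this
  by_cases hcase : ∃ y ∈ l, y ≠ c0 ∧ G.Adj q y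
  · obtain ⟨y, hy, hyc, hqy⟩ := hcase
    let Y : Finset V := (G.neighborFinset q).filter (· ∈ l)
    have hYm : ∀ w, w ∈ Y ↔ G.Adj q w ∧ w ∈ l := by intro w; simp [Y]
    have hear : ∀ w, G.Adj q w → Ear G l c0 w (e' ++ [q]) := by
      intro w hw
      refine ⟨hne, (List.nodup_cons.1 hnd).2, hel, ?_⟩
      rw [← List.cons_append, List.isChain_append]
      refine ⟨hch, by simp, ?_⟩
      intro x hx y hy
      rw [gl_snoc] at hx
      simp at hx hy
      subst hx; subst hy; exact hw
    obtain ⟨m, hm2, -, hm⟩ := cyc_gap h {c0} Y (by simpa using hc0)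
      (fun w hw => ((hYm w).1 hw).2) (e'.length + 2) (by omega) c0 y (by simp)
      ((hYm y).2 ⟨hqy, hy⟩) (Ne.symm hyc)
      (by
        intro a ha b hb hab
        rw [Finset.mem_union, Finset.mem_singleton, hYm] at ha hb
        rcases ha with rfl | ha
        · rcases hb with rfl | hb
          · exact absurd rfl hab
          · exact ⟨_, hear b hb.1⟩
        · rcases hb with rfl | hb
          · exact ⟨_, (hear a ha.1).symm⟩
          · exact ⟨_, ear_single hql ha.1 hb.1⟩)
      (by
        intro a ha b hb hab
        rw [Finset.mem_singleton] at ha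
        subst ha
        exact ⟨_, hear b ((hYm b).1 hb).1, by simp⟩)
    have hdeg : G.degree q ≤ (e'.toFinset ∪ Y).card := deg_le G (by
      intro w hw
      rw [Finset.mem_union, List.mem_toFinset, hYm]
      rcases hN w hw with h1 | h1
      · rw [List.mem_append] at h1
        rcases h1 with h1 | h1
        · exact Or.inl h1
        · simp at h1; subst h1; exact absurd hw (G.loopless.irrefl _)
      · exact Or.inr ⟨hw, h1⟩)
    have h4 := Finset.card_union_le e'.toFinset Y
    have h5 := List.toFinset_card_le e'
    have h6 : Y.card ≤ ({c0} ∪ Y).card := Finset.card_le_card Finset.subset_union_right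
    have h7 := hd q
    have h8 : e'.length * 2 ≤ e'.length * m := Nat.mul_le_mul_left _ hm2
    simp only [Nat.add_sub_cancel] at hm
    omega
  · push Not at hcase
    have hP : Pth G c0 q (c0 :: (e' ++ [q])) := ⟨by simp, gl_snoc _ _ _, hnd, hch⟩
    obtain ⟨Q1, r, Q2, hQ, hqr, hqm, hlen, hgood⟩ := end_good G hP (by
      intro w hw
      rw [List.mem_cons]
      rcases hN w hw with h1 | h1
      · exact Or.inr h1
      · by_cases hwc : w = c0
        · exact Or.inl hwc
        · exact absurd hw (hcase w h1 hwc)) (hd q) hd1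
    have hnd' := hnd
    rw [hQ] at hnd'
    have honly : ∀ x ∈ Q1 ++ r :: Q2, x ∈ l → x = c0 := by
      intro x hx hxl
      rw [← hQ, List.mem_cons] at hx
      exact hx.elim id (fun hx => absurd hxl (hel x hx))
    rw [hQ] at hP
    have hsp := hP.split
    have hfirst : c0 ∈ r :: Q2 → c0 = r := by
      intro hc
      rcases Q1 with _ | ⟨z, Q1⟩
      · simp at hQ; exact hQ.1
      · simp only [List.cons_append, List.cons.injEq] at hQ
        rw [List.cons_append, List.nodup_cons] at hnd'
        rw [← hQ.1] at hnd'
        exact absurd (List.mem_append_right _ hc) hnd'.1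
    have hdis : ∀ x ∈ Q1 ++ [r], x ∈ r :: Q2 → x = r := by
      intro x hx hx2
      rw [List.mem_append] at hx
      rcases hx with hx | hx
      · rw [List.nodup_append] at hnd'
        exact absurd rfl (hnd'.2.2 x hx x hx2)
      · simpa using hx
    obtain ⟨a, ha, z, hz, hza, R, hR, hRo, hRl⟩ := ear_exists hG {x | x ∈ l} (d+1) _ (by
        intro r
        by_contra hcon
        push Not at hcon
        have h0 := hcon (l[0]) (List.getElem_mem _)
        have h1 := hcon (l[1]) (List.getElem_mem _)
        have := (h.1.1.getElem_inj_iff).1 (h0.trans h1.symm)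
        omega) {x | x ∈ r :: Q2} r c0 (Q1 ++ [r]) le_rfl hgood
        ⟨q, List.mem_cons_of_mem _ hqm, hqr.ne⟩ hc0 hsp.1 (by
          intro x hx hxl
          refine honly x ?_ hxl
          simp at hx ⊢; tauto) hdis (by
          intro x hx hxl
          have hx0 : x = c0 := honly x (List.mem_append_right _ hx) hxl
          rw [hx0]; rw [hx0] at hx
          exact hfirst hx)
    obtain ⟨hR1, hR2, hR3, hR4⟩ := hR
    rcases R with _ | ⟨a', R⟩
    · simp at hR1
    simp at hR1
    subst hR1
    have hRne : R ≠ [] := by rintro rfl; simp at hRl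
    obtain ⟨e2, z', rfl⟩ := snoc_last hRne
    rw [gl_snoc] at hR2
    simp at hR2
    subst hR2
    have hRnd := hR3
    rw [List.nodup_cons, List.nodup_append] at hR3
    have he2 : Ear G l a' z' e2 := by
      refine ⟨?_, hR3.2.1, ?_, hR4⟩
      · rintro rfl; simp at hRl; omega
      · intro x hx hxl
        rcases hRo x (by simp [hx]) hxl with rfl | rfl
        · exact hR3.1 (List.mem_append_left _ hx)
        · exact hR3.2.2.2 x hx x (by simp) rfl
    simp at hRl
    obtain ⟨m, hm2, -, hm⟩ := cyc_gap h {a'} {z'} (by simpa using ha) (by simpa using hz)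
      (e2.length + 1) (by omega) a' z' (by simp) (by simp) (Ne.symm hza)
      (by
        intro u hu w hw huw
        simp only [Finset.mem_union, Finset.mem_singleton] at hu hw
        rcases hu with rfl | rfl <;> rcases hw with rfl | rfl
        · exact absurd rfl huw
        · exact ⟨_, he2⟩
        · exact ⟨_, he2.symm⟩
        · exact absurd rfl huw)
      (by
        intro u hu w hw huw
        rw [Finset.mem_singleton] at hu hw
        subst hu; subst hw
        exact ⟨_, he2, le_rfl⟩)
    have hc2 : ({a'} ∪ {z'} : Finset V).card = 2 := by
      rw [← Finset.insert_eq, Finset.card_pair (Ne.symm hza)]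
    rw [hc2] at hm
    have h8 : (e2.length + 1 - 2) * 2 ≤ (e2.length + 1 - 2) * m := Nat.mul_le_mul_left _ hm2
    omega

theorem dominating [Fintype V] [DecidableEq V] (G : SimpleGraph V) [DecidableRel G.Adj]
    (d : ℕ) (hd : ∀ v, d ≤ G.degree v) (hn : Fintype.card V + 2 ≤ 3 * d) {l : List V}
    (h : MaxCyc G l) (hl : 2 * d ≤ l.length) {v : V} (hv : v ∉ l) :
    ∃ v, v ∉ l ∧ ∀ w, G.Adj v w → w ∈ l := by
  obtain ⟨e, ⟨hne, hel, hnd, hch⟩, hmax⟩ := exists_longest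
    (fun e : List V => e ≠ [] ∧ (∀ x ∈ e, x ∉ l) ∧ e.Nodup ∧ e.IsChain G.Adj)
    (fun e he => he.2.2.1) ⟨[v], by simp, by simpa using hv, by simp, by simp⟩
  have hN : ∀ e2 : List V, e2 ≠ [] → (∀ x ∈ e2, x ∉ l) → e2.Nodup → e2.IsChain G.Adj →
      e.length ≤ e2.length →
      ∀ q, e2.getLast? = some q → ∀ w, G.Adj q w → w ∈ e2 ∨ w ∈ l := by
    intro e2 h1 h2 h3 h4 h5 q hq w hw
    by_contra hcon
    push Not at hcon
    have := hmax (e2 ++ [w]) ⟨by simp, by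
        intro x hx; rw [List.mem_append] at hx
        rcases hx with hx | hx
        · exact h2 x hx
        · simp at hx; subst hx; exact hcon.2, by
        rw [List.nodup_append]
        refine ⟨h3, by simp, ?_⟩
        intro a ha b hb hab
        simp only [List.mem_singleton] at hb
        subst hab; subst hb
        exact hcon.1 ha, by
        rw [List.isChain_append]
        refine ⟨h4, by simp, ?_⟩
        intro x hx y hy
        rw [hq] at hx
        simp at hx hy
        subst hx; subst hy; exact hw⟩
    simp at this
    omega
  have hlast := hN e hne hel hnd hch le_rfl
  have hfirst := hN e.reverse (by simpa using hne) (by simpa using hel)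
    (List.nodup_reverse.2 hnd) (by
      rw [List.isChain_reverse]; exact hch.imp (fun a b hab => hab.symm)) (by simp)
  rcases e with _ | ⟨x, e⟩
  · exact absurd rfl hne
  by_cases he : e = []
  · subst he
    refine ⟨x, hel x (by simp), fun w hw => ?_⟩
    rcases hlast x (by simp) w hw with h1 | h1
    · simp at h1; subst h1; exact absurd hw (G.loopless.irrefl _)
    · exact h1
  exfalso
  have hel0 := hel
  have hnd0 := hnd
  have hlast' := hlast (e.getLast he) (by simp [List.getLast?_cons, List.getLast?_eq_getLast_of_ne_nil he])
  have hfirst' := hfirst x (by simp)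
  have hgl : (x :: e).getLast? = some (e.getLast he) := by
    simp [List.getLast?_cons, List.getLast?_eq_getLast_of_ne_nil he]
  have hym : e.getLast he ∈ e := List.getLast_mem he
  generalize e.getLast he = y at hlast' hgl hym
  have hxl : x ∉ l := hel x (by simp)
  have hyl : y ∉ l := hel y (by simp [hym])
  let X : Finset V := (G.neighborFinset x).filter (· ∈ l)
  let Y : Finset V := (G.neighborFinset y).filter (· ∈ l)
  have hXm : ∀ w, w ∈ X ↔ G.Adj x w ∧ w ∈ l := by intro w; simp [X]
  have hYm : ∀ w, w ∈ Y ↔ G.Adj y w ∧ w ∈ l := by intro w; simp [Y]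
  have hec : (x :: e).toFinset.card = e.length + 1 := by
    rw [List.toFinset_card_of_nodup hnd]; simp
  have hdX : G.degree x ≤ e.length + X.card := by
    have h1 : G.degree x ≤ ((x :: e).toFinset.erase x ∪ X).card := deg_le G (by
      intro w hw
      rw [Finset.mem_union, Finset.mem_erase, List.mem_toFinset, hXm]
      rcases hfirst' w hw with h1 | h1
      · exact Or.inl ⟨hw.ne', by simpa [or_comm] using h1⟩
      · exact Or.inr ⟨hw, h1⟩)
    have h2 := Finset.card_union_le ((x :: e).toFinset.erase x) X
    rw [Finset.card_erase_of_mem (by simp), hec] at h2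
    omega
  have hdY : G.degree y ≤ e.length + Y.card := by
    have h1 : G.degree y ≤ ((x :: e).toFinset.erase y ∪ Y).card := deg_le G (by
      intro w hw
      rw [Finset.mem_union, Finset.mem_erase, List.mem_toFinset, hYm]
      rcases hlast' w hw with h1 | h1
      · exact Or.inl ⟨hw.ne', h1⟩
      · exact Or.inr ⟨hw, h1⟩)
    have h2 := Finset.card_union_le ((x :: e).toFinset.erase y) Y
    rw [Finset.card_erase_of_mem (by simp [hym]), hec] at h2
    omega
  have hcn : l.length + (e.length + 1) ≤ Fintype.card V := by
    have h1 : (l ++ (x :: e)).Nodup := by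
      rw [List.nodup_append]
      refine ⟨h.1.1, hnd, ?_⟩
      intro a ha b hb hab
      subst hab
      exact hel a hb ha
    simpa using h1.length_le_card
  have hx1 := hd x
  have hy1 := hd y
  have hpos : 1 ≤ e.length := by
    rcases e with _ | ⟨_, e⟩
    · exact absurd rfl he
    · simp
  obtain ⟨x0, hx0⟩ : X.Nonempty := Finset.card_pos.1 (by omega)
  obtain ⟨y0, hy0, hxy0⟩ : ∃ y0 ∈ Y, y0 ≠ x0 := Finset.exists_mem_ne (by omega) x0
  have hear : ∀ a b, G.Adj x a → G.Adj y b → Ear G l a b (x :: e) := by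
    intro a b ha hb
    refine ⟨by simp, hnd, hel, ?_⟩
    rw [List.cons_append, List.isChain_cons_cons]
    refine ⟨ha.symm, ?_⟩
    rw [← List.cons_append, List.isChain_append]
    refine ⟨hch, by simp, ?_⟩
    intro s hs t ht
    rw [hgl] at hs
    simp at hs ht
    subst hs; subst ht; exact hb
  obtain ⟨m, hm2, hmc, hm⟩ := cyc_gap h X Y (fun w hw => ((hXm w).1 hw).2)
    (fun w hw => ((hYm w).1 hw).2) (e.length + 2) (by omega) x0 y0 hx0 hy0 (Ne.symm hxy0)
    (by
      intro a ha b hb hab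
      rw [Finset.mem_union, hXm, hYm] at ha hb
      rcases ha with ha | ha <;> rcases hb with hb | hb
      · exact ⟨_, ear_single hxl ha.1 hb.1⟩
      · exact ⟨_, hear a b ha.1 hb.1⟩
      · exact ⟨_, (hear b a hb.1 ha.1).symm⟩
      · exact ⟨_, ear_single hyl ha.1 hb.1⟩)
    (by
      intro a ha b hb hab
      exact ⟨_, hear a b ((hXm a).1 ha).1 ((hYm b).1 hb).1, by simp⟩)
  have hui := Finset.card_union_add_card_inter X Y
  have hXU : X.card ≤ (X ∪ Y).card := Finset.card_le_card Finset.subset_union_left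
  have hYU : Y.card ≤ (X ∪ Y).card := Finset.card_le_card Finset.subset_union_right
  simp only [Nat.add_sub_cancel] at hm
  rcases Nat.lt_or_ge e.length 2 with hp | hp
  · have hp1 : e.length = 1 := by omega
    rw [hp1] at hm hdX hdY hcn
    omega
  · obtain ⟨t, ht⟩ : ∃ t, e.length = t + 2 := ⟨e.length - 2, by omega⟩
    rw [ht] at hm hdX hdY hcn
    have h8 : t * 2 ≤ t * m := Nat.mul_le_mul_left _ hm2
    have h9 : (t + 2) * m = t * m + 2 * m := by ring
    omega

end Niko

theorem nikoghosyan_1981_hamiltonian (G : SimpleGraph V) [Fintype V] [DecidableEq V] [DecidableRel G.Adj]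
    (h2 : KConnected G 2)
    (hδ : (G.minDegree : ℝ) ≥ (Fintype.card V + connectivity G : ℝ) / 3) :
    G.IsHamiltonian := by
  have hbdd : BddAbove {k | KConnected G k} := ⟨Fintype.card V, fun k hk => hk.1.le⟩
  have hk2 : 2 ≤ connectivity G := le_csSup hbdd h2
  have hk : ¬ KConnected G (connectivity G + 1) := by
    intro hk
    have : connectivity G + 1 ≤ connectivity G := le_csSup hbdd hk
    omega
  have hn3 := h2.1
  have h3 : Fintype.card V + connectivity G ≤ 3 * G.minDegree := by
    have : (Fintype.card V + connectivity G : ℝ) ≤ 3 * (G.minDegree : ℝ) := by linarith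
    exact_mod_cast this
  have hd : ∀ v, G.minDegree ≤ G.degree v := fun v => G.minDegree_le_degree v
  have hG : ∀ r : V, (G.induce ({r}ᶜ : Set V)).Preconnected := by
    intro r
    have := (h2.2 {r} (by simp)).preconnected
    rwa [Finset.coe_singleton] at this
  have hpre : G.Preconnected := by
    intro a b
    have := (h2.2 ∅ (by simp)).preconnected ⟨a, by simp⟩ ⟨b, by simp⟩
    exact this.map (Embedding.induce _).toHom
  have : Nonempty V := Fintype.card_pos_iff.1 (by omega)
  obtain ⟨l, hl⟩ := Niko.exists_maxCyc G G.minDegree hd (by omega)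
  by_contra hham
  obtain ⟨v, hv⟩ : ∃ v, v ∉ l := by
    by_contra hcon
    push Not at hcon
    exact hham (Niko.cyc_ham hl.1 hcon)
  have hdir := Niko.dirac G hG hpre _ hd (by omega) hl hv
  obtain ⟨u, hu, huN⟩ := Niko.dominating G _ hd (by omega) hl hdir hv
  have hdu := hd u
  obtain ⟨I, hI, hIc⟩ := Niko.indep_set G hl hu huN (by omega)
  exact Niko.final_step G _ _ hd (by omega) h3 hk I hI (by omega)
end
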